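/- Suppose M > 1, c > 1 (c not an integer), γ > 0, and let 𝒜(M; c, γ) denote the number of quadruples of integers (n₁, n₂, n₃, n₄) with M < n₁, n₂, n₃, n₄ ≤ 2M and |n₁^c + n₂^c − n₃^c − n₄^c| < γ. Then for every fixed η > 0, 𝒜(M; c, γ) ≪ (γ·M^{4−c} + M²)·M^η, where the implied constant depends only on c and η. -/

import Mathlib

section Sa
open Real Set Filter Topology MeasureTheory

noncomputable def ex (x : ℝ) : ℂ := Complex.exp (((2 * π * x : ℝ) : ℂ) * Complex.I)

lemma ex_norm (x : ℝ) : ‖ex x‖ = 1 := by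
  unfold ex; exact Complex.norm_exp_ofReal_mul_I _

lemma ex_add (x y : ℝ) : ex (x + y) = ex x * ex y := by
  unfold ex; rw [← Complex.exp_add]; congr 1; push_cast; ring

lemma ex_zero : ex 0 = 1 := by simp [ex]

lemma ex_neg (x : ℝ) : ex (-x) = (starRingEnd ℂ) (ex x) := by
  unfold ex
  rw [← Complex.exp_conj, map_mul, Complex.conj_ofReal, Complex.conj_I]; congr 1
  push_cast; ring

lemma ex_continuous : Continuous ex := by
  unfold ex; fun_prop

lemma ex_hasDerivAt {f : ℝ → ℝ} {f' v : ℝ} (h : HasDerivAt f f' v) :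
    HasDerivAt (fun v => ex (f v)) (((2 * π * f' : ℝ) : ℂ) * Complex.I * ex (f v)) v := by
  unfold ex
  have h1 : HasDerivAt (fun v => ((2 * π * f v : ℝ) : ℂ)) ((2 * π * f' : ℝ) : ℂ) v :=
    (h.const_mul (2 * π)).ofReal_comp
  have h2 := (h1.mul_const Complex.I).cexp
  convert h2 using 1
  ring

lemma int_inv_bound (X v1 v2 : ℝ) (hX : 0 < X) (hv : v1 ≤ v2) :
    ∫ v in v1..v2, (1 + X * (v - 1) ^ 2)⁻¹ ≤ π * X ^ (-(1 / 2) : ℝ) := by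
  have hs : 0 < √X := Real.sqrt_pos.mpr hX
  have hi : Integrable (fun v : ℝ => (1 + (√X * v - √X) ^ 2)⁻¹) := by
    have := (integrable_inv_one_add_sq.comp_sub_right (√X)).comp_mul_left' hs.ne'
    simpa using this
  have e1 : ∀ v : ℝ, (1 + X * (v - 1) ^ 2)⁻¹ = (1 + (√X * v - √X) ^ 2)⁻¹ := by
    intro v
    have : (√X * v - √X) ^ 2 = X * (v - 1) ^ 2 := by
      have : (√X) ^ 2 = X := Real.sq_sqrt hX.le
      calc (√X * v - √X) ^ 2 = (√X) ^ 2 * (v - 1) ^ 2 := by ring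
        _ = _ := by rw [this]
    rw [this]
  simp_rw [e1]
  rw [intervalIntegral.integral_of_le hv]
  calc ∫ v in Ioc v1 v2, (1 + (√X * v - √X) ^ 2)⁻¹ ≤ ∫ v : ℝ, (1 + (√X * v - √X) ^ 2)⁻¹ := by
        apply setIntegral_le_integral hi
        filter_upwards with v
        positivity
    _ = (√X)⁻¹ * π := by
        have h := Measure.integral_comp_mul_left (fun u : ℝ => (1 + (u - √X) ^ 2)⁻¹) (√X)
        rw [h]
        have h2 := integral_sub_right_eq_self (μ := volume) (fun u : ℝ => (1 + u ^ 2)⁻¹) (√X)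
        rw [h2, integral_univ_inv_one_add_sq, abs_of_pos (inv_pos.mpr hs)]
        simp
    _ = _ := by
        rw [Real.rpow_neg hX.le, ← Real.sqrt_eq_rpow, mul_comm]

/-- abstract second derivative test -/
lemma vdc (v1 v2 m B : ℝ) (hv : v1 ≤ v2) (hm : 0 < m) (φ p p' : ℝ → ℝ)
    (hφ : ∀ v ∈ Icc v1 v2, HasDerivAt φ ((v - 1) * p v) v)
    (hp : ∀ v ∈ Icc v1 v2, HasDerivAt p (p' v) v)
    (hp'c : ContinuousOn p' (Icc v1 v2))
    (hpm : ∀ v ∈ Icc v1 v2, m ≤ p v)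
    (hpB : ∀ v ∈ Icc v1 v2, p v ≤ B) (hp'B : ∀ v ∈ Icc v1 v2, |p' v| ≤ B)
    (hvB : ∀ v ∈ Icc v1 v2, |v - 1| ≤ B) :
    ∃ C > 0, ∀ X > 0, ∀ G ≥ 0, ∀ g g' : ℝ → ℝ,
      (∀ v ∈ Icc v1 v2, HasDerivAt g (g' v) v) → ContinuousOn g' (Icc v1 v2) →
      g v1 = 0 → g v2 = 0 → (∀ v ∈ Icc v1 v2, |g v| ≤ G) → (∀ v ∈ Icc v1 v2, |g' v| ≤ G) →
      ‖∫ v in v1..v2, (g v : ℂ) * ex (X * φ v)‖ ≤ C * G * X ^ (-(1 / 2) : ℝ) := by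
  have hB : 0 ≤ B := (abs_nonneg _).trans (hvB v1 ⟨le_rfl, hv⟩)
  set m' : ℝ := min (1 / 2) (π * m) with hm'
  have hm'0 : 0 < m' := by rw [hm']; positivity
  set K : ℝ := B + 2 * π * (2 * B + B * B) / m' with hK
  have hK0 : 0 ≤ K := by rw [hK]; positivity
  refine ⟨(K / m' + 1) * π, by positivity, ?_⟩
  intro X hX G hG g g' hg hg'c hg1 hg2 hgG hg'G
  set D : ℝ → ℂ := fun v => 1 + ((2 * π * X * ((v - 1) ^ 2 * p v) : ℝ) : ℂ) * Complex.I with hD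
  set D' : ℝ → ℂ := fun v =>
    ((2 * π * X * (2 * (v - 1) * p v + (v - 1) ^ 2 * p' v) : ℝ) : ℂ) * Complex.I with hD'
  have hDd : ∀ v ∈ Icc v1 v2, HasDerivAt D (D' v) v := by
    intro v hv
    have h1 : HasDerivAt (fun v : ℝ => 2 * π * X * ((v - 1) ^ 2 * p v))
        (2 * π * X * (2 * (v - 1) * p v + (v - 1) ^ 2 * p' v)) v := by
      have h0 : HasDerivAt (fun v : ℝ => (v - 1) ^ 2) (2 * (v - 1)) v := by
        have := ((hasDerivAt_id v).sub_const 1).pow 2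
        refine (this.congr_deriv ?_)
        simp
      exact (h0.mul (hp v hv)).const_mul _
    have h2 := (h1.ofReal_comp.mul_const Complex.I).const_add (1 : ℂ)
    exact h2
  have hDlow : ∀ v ∈ Icc v1 v2, m' * (1 + X * (v - 1) ^ 2) ≤ ‖D v‖ := by
    intro v hv
    have hre : (D v).re = 1 := by
      simp only [hD]; rw [Complex.add_re, Complex.re_ofReal_mul]; simp
    have him : (D v).im = 2 * π * X * ((v - 1) ^ 2 * p v) := by
      simp only [hD]; rw [Complex.add_im, Complex.im_ofReal_mul]; simp
    have h1 : 1 ≤ ‖D v‖ := by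
      have := Complex.abs_re_le_norm (D v); rw [hre] at this; simpa using this
    have h2 : 2 * π * X * ((v - 1) ^ 2 * m) ≤ ‖D v‖ := by
      have := Complex.abs_im_le_norm (D v); rw [him] at this
      refine le_trans ?_ (le_trans (le_abs_self _) this)
      have := hpm v hv
      gcongr
    have h3 : m' ≤ 1 / 2 := min_le_left _ _
    have h4 : m' ≤ π * m := min_le_right _ _
    have h5 : 0 ≤ X * (v - 1) ^ 2 := by positivity
    nlinarith [mul_le_mul_of_nonneg_right h4 h5]
  have hDne : ∀ v ∈ Icc v1 v2, D v ≠ 0 := by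
    intro v hv h
    have := hDlow v hv
    rw [h, norm_zero] at this
    have : 0 < m' * (1 + X * (v - 1) ^ 2) := by positivity
    linarith
  have hDc : ContinuousOn D (Icc v1 v2) := fun v hv => (hDd v hv).continuousAt.continuousWithinAt
  have hpc : ContinuousOn p (Icc v1 v2) := fun v hv => (hp v hv).continuousAt.continuousWithinAt
  have hgc : ContinuousOn g (Icc v1 v2) := fun v hv => (hg v hv).continuousAt.continuousWithinAt
  have hφc : ContinuousOn φ (Icc v1 v2) := fun v hv => (hφ v hv).continuousAt.continuousWithinAt
  have hD'c : ContinuousOn D' (Icc v1 v2) := by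
    have : ContinuousOn (fun v : ℝ => 2 * π * X * (2 * (v - 1) * p v + (v - 1) ^ 2 * p' v))
      (Icc v1 v2) := by fun_prop
    exact (Complex.continuous_ofReal.comp_continuousOn this).mul continuousOn_const
  have hexc : ContinuousOn (fun v => ex (X * φ v)) (Icc v1 v2) :=
    ex_continuous.comp_continuousOn (hφc.const_mul X |> fun h => by simpa using h)
  have hgcc : ContinuousOn (fun v => (g v : ℂ)) (Icc v1 v2) :=
    Complex.continuous_ofReal.comp_continuousOn hgc
  have hg'cc : ContinuousOn (fun v => (g' v : ℂ)) (Icc v1 v2) :=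
    Complex.continuous_ofReal.comp_continuousOn hg'c
  have hvc : ContinuousOn (fun v : ℝ => ((v - 1 : ℝ) : ℂ)) (Icc v1 v2) :=
    (Complex.continuous_ofReal.comp (by fun_prop)).continuousOn
  set R : ℝ → ℂ := fun v => (-((g' v : ℂ) * ((v - 1 : ℝ) : ℂ) / D v) +
      (g v : ℂ) * ((v - 1 : ℝ) : ℂ) * D' v / (D v) ^ 2) * ex (X * φ v) with hR
  have hRc : ContinuousOn R (Icc v1 v2) := by
    refine ContinuousOn.mul (ContinuousOn.add (ContinuousOn.neg ?_) ?_) hexc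
    · exact (hg'cc.mul hvc).div hDc hDne
    · exact ((hgcc.mul hvc).mul hD'c).div (hDc.pow 2) (fun v hv => pow_ne_zero 2 (hDne v hv))
  set H : ℝ → ℂ := fun v => (g v : ℂ) * ((v - 1 : ℝ) : ℂ) / D v * ex (X * φ v) with hH
  have hHd : ∀ v ∈ Icc v1 v2, HasDerivAt H ((g v : ℂ) * ex (X * φ v) - R v) v := by
    intro v hv
    have h1 : HasDerivAt (fun v : ℝ => ((v - 1 : ℝ) : ℂ)) ((1 : ℝ) : ℂ) v :=
      ((hasDerivAt_id v).sub_const 1).ofReal_comp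
    have h2 := (((hg v hv).ofReal_comp.mul h1).div (hDd v hv) (hDne v hv)).mul
      (ex_hasDerivAt ((hφ v hv).const_mul X))
    refine h2.congr_deriv ?_
    simp only [hR, Pi.mul_apply, Pi.div_apply, Complex.ofReal_one, mul_one]
    have hne := hDne v hv
    have hDv : ((2 * π * (X * ((v - 1) * p v)) : ℝ) : ℂ) * Complex.I * ((v - 1 : ℝ) : ℂ) = D v - 1 := by
      simp only [hD]; push_cast; ring
    generalize D v = d at *
    generalize ex (X * φ v) = ee at *
    generalize hq : ((2 * π * (X * ((v - 1) * p v)) : ℝ) : ℂ) * Complex.I = q at *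
    field_simp
    have : d = 1 + q * ((v - 1 : ℝ) : ℂ) := by rw [hDv]; ring
    linear_combination (-(g v : ℂ) * ee * d) * this
  have key : ∫ v in v1..v2, (g v : ℂ) * ex (X * φ v) = ∫ v in v1..v2, R v := by
    have h := intervalIntegral.integral_eq_sub_of_hasDerivAt (f := H)
      (f' := fun v => (g v : ℂ) * ex (X * φ v) - R v) (a := v1) (b := v2)
      (by rw [uIcc_of_le hv]; exact hHd)
      (by apply ContinuousOn.intervalIntegrable; rw [uIcc_of_le hv]
          exact (hgcc.mul hexc).sub hRc)
    rw [intervalIntegral.integral_sub] at h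
    · have : H v2 - H v1 = 0 := by simp [hH, hg1, hg2]
      rw [this] at h
      exact sub_eq_zero.mp h
    · apply ContinuousOn.intervalIntegrable; rw [uIcc_of_le hv]; exact hgcc.mul hexc
    · apply ContinuousOn.intervalIntegrable; rw [uIcc_of_le hv]; exact hRc
  have hRb : ∀ v ∈ Icc v1 v2, ‖R v‖ ≤ K / m' * G * (1 + X * (v - 1) ^ 2)⁻¹ := by
    intro v hv
    have hDl := hDlow v hv
    have hpos : 0 < m' * (1 + X * (v - 1) ^ 2) := by positivity
    have hDpos : 0 < ‖D v‖ := hpos.trans_le hDl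
    have hvb := hvB v hv
    have h1 : ‖(g' v : ℂ) * ((v - 1 : ℝ) : ℂ) / D v‖ ≤ G * B / ‖D v‖ := by
      rw [norm_div, norm_mul, Complex.norm_real, Complex.norm_real]
      gcongr
      · exact hg'G v hv
      · exact hvb
    have hvD : ‖((v - 1 : ℝ) : ℂ) * D' v‖ ≤ 2 * π * (2 * B + B * B) / m' * ‖D v‖ := by
      simp only [hD']
      rw [norm_mul, norm_mul, Complex.norm_I, Complex.norm_real, Complex.norm_real, mul_one,
        Real.norm_eq_abs, Real.norm_eq_abs, ← abs_mul]
      have e1 : (v - 1) * (2 * π * X * (2 * (v - 1) * p v + (v - 1) ^ 2 * p' v)) =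
        2 * π * (2 * p v + (v - 1) * p' v) * (X * (v - 1) ^ 2) := by ring
      rw [e1, abs_mul, abs_mul, abs_of_nonneg (by positivity : (0:ℝ) ≤ X * (v - 1) ^ 2),
        abs_of_pos (by positivity : (0:ℝ) < 2 * π)]
      have h3 : |2 * p v + (v - 1) * p' v| ≤ 2 * B + B * B := by
        refine (abs_add_le _ _).trans ?_
        rw [abs_mul, abs_mul, abs_of_pos (by norm_num : (0:ℝ) < 2),
          abs_of_pos (hm.trans_le (hpm v hv))]
        have := hpB v hv
        have := hp'B v hv
        gcongr
      calc 2 * π * |2 * p v + (v - 1) * p' v| * (X * (v - 1) ^ 2)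
          ≤ 2 * π * (2 * B + B * B) * (‖D v‖ / m') := by
            gcongr
            rw [le_div_iff₀ hm'0]
            nlinarith
        _ = _ := by ring
    have h2 : ‖(g v : ℂ) * ((v - 1 : ℝ) : ℂ) * D' v / (D v) ^ 2‖ ≤
        G * (2 * π * (2 * B + B * B) / m') / ‖D v‖ := by
      rw [mul_assoc, norm_div, norm_mul, norm_pow, Complex.norm_real]
      calc ‖g v‖ * ‖((v - 1 : ℝ) : ℂ) * D' v‖ / ‖D v‖ ^ 2
          ≤ G * (2 * π * (2 * B + B * B) / m' * ‖D v‖) / ‖D v‖ ^ 2 := by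
            gcongr
            exact hgG v hv
        _ = _ := by field_simp
    calc ‖R v‖ = ‖-((g' v : ℂ) * ((v - 1 : ℝ) : ℂ) / D v) +
      (g v : ℂ) * ((v - 1 : ℝ) : ℂ) * D' v / (D v) ^ 2‖ := by
          simp only [hR]; rw [norm_mul, ex_norm, mul_one]
      _ ≤ G * B / ‖D v‖ + G * (2 * π * (2 * B + B * B) / m') / ‖D v‖ := by
          refine (norm_add_le _ _).trans ?_
          rw [norm_neg]
          exact add_le_add h1 h2
      _ = G * K / ‖D v‖ := by rw [hK]; ring
      _ ≤ G * K / (m' * (1 + X * (v - 1) ^ 2)) := by gcongr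
      _ = _ := by field_simp
  rw [key]
  have hic : Continuous (fun v : ℝ => (1 + X * (v - 1) ^ 2)⁻¹) := by
    apply Continuous.inv₀ (by fun_prop)
    intro v; positivity
  calc ‖∫ v in v1..v2, R v‖ ≤ ∫ v in v1..v2, K / m' * G * (1 + X * (v - 1) ^ 2)⁻¹ := by
        apply intervalIntegral.norm_integral_le_of_norm_le hv
        · filter_upwards with v hv'
          exact hRb v ⟨hv'.1.le, hv'.2⟩
        · exact (hic.const_smul (K / m' * G)).intervalIntegrable _ _
    _ = K / m' * G * ∫ v in v1..v2, (1 + X * (v - 1) ^ 2)⁻¹ := by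
        rw [intervalIntegral.integral_const_mul]
    _ ≤ K / m' * G * (π * X ^ (-(1 / 2) : ℝ)) := by
        gcongr
        exact int_inv_bound X v1 v2 hX hv
    _ ≤ _ := by
        have : 0 ≤ π * G * X ^ (-(1 / 2) : ℝ) := by positivity
        nlinarith

end Sa

section Sb
open Real Set Filter Topology MeasureTheory

noncomputable def phs (c v : ℝ) : ℝ := v ^ c / c - v + (1 - 1 / c)

lemma dslope_an {f : ℝ → ℝ} (hf : ∀ v > 0, AnalyticAt ℝ f v) : ∀ v > 0, AnalyticAt ℝ (dslope f 1) v := by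
  intro v hv
  by_cases h : v = 1
  · subst h
    obtain ⟨p, hp⟩ := hf 1 one_pos
    exact ⟨_, hp.has_fpower_series_dslope_fslope⟩
  · have h1 : AnalyticAt ℝ (fun x => (x - 1)⁻¹ * (f x - f 1)) v := by
      have := hf v hv
      have h2 : AnalyticAt ℝ (fun x : ℝ => x - 1) v := by fun_prop
      exact (h2.inv (sub_ne_zero.mpr h)).mul (this.sub analyticAt_const)
    refine h1.congr ?_
    filter_upwards [dslope_eventuallyEq_slope_of_ne f h] with x hx
    rw [hx, slope_def_field]; ring

lemma rpow_an (s : ℝ) : ∀ v > 0, AnalyticAt ℝ (fun x : ℝ => x ^ s) v := by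
  intro v hv
  exact (Real.contDiffAt_rpow_const_of_ne (n := ⊤) hv.ne').analyticAt 

lemma phs_deriv (c : ℝ) (hc : 1 < c) (v : ℝ) (hv : 0 < v) : HasDerivAt (phs c) (v ^ (c - 1) - 1) v := by
  have h := (((Real.hasDerivAt_rpow_const (x := v) (p := c) (Or.inl hv.ne')).div_const c).sub
    (hasDerivAt_id v)).add_const (1 - 1 / c)
  refine h.congr_deriv ?_
  field_simp

lemma phase_facts (c : ℝ) (hc : 1 < c) : ∃ p r : ℝ → ℝ, (∀ v > 0, AnalyticAt ℝ p v) ∧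
    (∀ v > 0, AnalyticAt ℝ r v) ∧ (∀ v > 0, 0 < p v) ∧
    (∀ v > 0, HasDerivAt (phs c) ((v - 1) * p v) v) ∧ ∀ v > 0, phs c v = r v * ((v - 1) * p v) := by
  have hp := dslope_an (rpow_an (c - 1))
  have hphs : ∀ v > 0, AnalyticAt ℝ (phs c) v := by
    intro v hv
    have := rpow_an c v hv
    unfold phs
    exact ((this.div_const).sub analyticAt_id).add analyticAt_const
  have hd := dslope_an hphs
  have hps : ∀ v : ℝ, (v - 1) * dslope (fun x : ℝ => x ^ (c - 1)) 1 v = v ^ (c - 1) - 1 := by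
    intro v
    have := sub_smul_dslope (fun x : ℝ => x ^ (c - 1)) 1 v
    simpa using this
  have hpp : ∀ v > 0, 0 < dslope (fun x : ℝ => x ^ (c - 1)) 1 v := by
    intro v hv
    rcases lt_trichotomy v 1 with h | h | h
    · have h1 := hps v
      have h2 : v ^ (c - 1) < 1 := Real.rpow_lt_one hv.le h (by linarith)
      by_contra h3
      push Not at h3
      nlinarith
    · subst h
      rw [dslope_same, (Real.hasDerivAt_rpow_const (x := 1) (p := c - 1) (Or.inl one_ne_zero)).deriv]
      simp; linarith
    · have h1 := hps v
      have h2 : 1 < v ^ (c - 1) := Real.one_lt_rpow h (by linarith)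
      by_contra h3
      push Not at h3
      nlinarith
  refine ⟨dslope (fun x : ℝ => x ^ (c - 1)) 1, fun v => dslope (phs c) 1 v /
    dslope (fun x : ℝ => x ^ (c - 1)) 1 v, hp, ?_, hpp, ?_, ?_⟩
  · intro v hv
    exact (hd v hv).div (hp v hv) (hpp v hv).ne'
  · intro v hv
    rw [hps]; exact phs_deriv c hc v hv
  · intro v hv
    have h1 := sub_smul_dslope (phs c) 1 v
    have h2 : phs c 1 = 0 := by unfold phs; simp; 
    rw [h2, smul_eq_mul, sub_zero] at h1
    rw [← h1]
    have := (hpp v hv).ne'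
    field_simp

structure Wt (a b : ℝ) where
  W : ℝ → ℝ
  W1 : ℝ → ℝ
  W2 : ℝ → ℝ
  K : ℝ
  d1 : ∀ t, HasDerivAt W (W1 t) t
  d2 : ∀ t, HasDerivAt W1 (W2 t) t
  c2 : Continuous W2
  z0 : ∀ t, t ∉ Ioo a b → W t = 0
  z1 : ∀ t, t ∉ Ioo a b → W1 t = 0
  z2 : ∀ t, t ∉ Ioo a b → W2 t = 0
  b0 : ∀ t, |W t| ≤ K
  b1 : ∀ t, |W1 t| ≤ K
  b2 : ∀ t, |W2 t| ≤ K
  nn : ∀ t, 0 ≤ W t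

lemma Wt.K_nonneg {a b : ℝ} (w : Wt a b) : 0 ≤ w.K := (abs_nonneg _).trans (w.b0 0)
lemma Wt.c0 {a b : ℝ} (w : Wt a b) : Continuous w.W :=
  continuous_iff_continuousAt.mpr fun t => (w.d1 t).continuousAt
lemma Wt.c1 {a b : ℝ} (w : Wt a b) : Continuous w.W1 :=
  continuous_iff_continuousAt.mpr fun t => (w.d2 t).continuousAt

lemma exists_Wt (a b : ℝ) (ha : 0 < a) (hab : a < b) :
    ∃ w : Wt (a / 2) (b + a / 2), ∀ t ∈ Icc a b, w.W t = 1 := by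
  let f : ContDiffBump ((a + b) / 2 : ℝ) := ⟨(b - a) / 2, b / 2, by linarith, by linarith⟩
  have hf : ContDiff ℝ 2 f := f.contDiff
  have hz : ∀ t, t ∉ Ioo (a / 2) (b + a / 2) → f t = 0 := by
    intro t ht
    apply f.zero_of_le_dist
    rw [Real.dist_eq]
    change b / 2 ≤ _
    by_contra h
    push Not at h
    rw [abs_lt] at h
    exact ht ⟨by linarith [h.1], by linarith [h.2]⟩
  have h1d : ∀ t, HasDerivAt f (deriv f t) t := fun t => (hf.differentiable (by norm_num) t).hasDerivAt
  have hf1 : ContDiff ℝ 1 (deriv f) := by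
    have : ContDiff ℝ (1 + 1) f := f.contDiff
    exact (contDiff_succ_iff_deriv.mp this).2.2
  have h2d : ∀ t, HasDerivAt (deriv f) (deriv (deriv f) t) t :=
    fun t => (hf1.differentiable (by norm_num) t).hasDerivAt
  have hc2 : Continuous (deriv (deriv f)) := by
    have : ContDiff ℝ (0 + 1) (deriv f) := by simpa using hf1
    exact (contDiff_succ_iff_deriv.mp this).2.2.continuous
  have hts : tsupport f ⊆ Icc (a / 2) (b + a / 2) := by
    apply closure_minimal _ isClosed_Icc
    intro t ht
    by_contra h
    exact ht (hz t (fun h' => h ⟨h'.1.le, h'.2.le⟩))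
  have hf0 : HasCompactSupport f := f.hasCompactSupport
  have z1 : ∀ g : ℝ → ℝ, Continuous (deriv g) → (∀ t, t ∉ Ioo (a / 2) (b + a / 2) → g t = 0) →
      ∀ t, t ∉ Ioo (a / 2) (b + a / 2) → deriv g t = 0 := by
    intro g hg hgz
    have hz' : ∀ t ∈ Iio (a / 2) ∪ Ioi (b + a / 2), deriv g t = 0 := by
      intro t ht
      have : g =ᶠ[𝓝 t] fun _ => 0 := by
        have ho : IsOpen (Iio (a / 2) ∪ Ioi (b + a / 2)) := isOpen_Iio.union isOpen_Ioi
        filter_upwards [ho.mem_nhds ht] with s hs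
        apply hgz
        rintro ⟨h1, h2⟩
        rcases hs with hs | hs
        · exact absurd hs (not_lt.mpr h1.le)
        · exact absurd hs (not_lt.mpr h2.le)
      rw [this.deriv_eq]; simp
    intro t ht
    have hcl : IsClosed {t | deriv g t = 0} := isClosed_eq hg continuous_const
    have hsub : closure (Iio (a / 2) ∪ Ioi (b + a / 2)) ⊆ {t | deriv g t = 0} :=
      hcl.closure_subset_iff.mpr hz'
    apply hsub
    rw [closure_union, closure_Iio, closure_Ioi]
    by_contra h
    simp only [mem_union, mem_Iic, mem_Ici, not_or, not_le] at h
    exact ht ⟨h.1, h.2⟩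
  have hcpt : ∀ g : ℝ → ℝ, (∀ t, t ∉ Ioo (a / 2) (b + a / 2) → g t = 0) → HasCompactSupport g := by
    intro g hg
    apply HasCompactSupport.intro (K := Icc (a / 2) (b + a / 2)) isCompact_Icc
    intro t ht
    exact hg t (fun h' => ht ⟨h'.1.le, h'.2.le⟩)
  have zz1 := z1 f hf1.continuous hz
  have zz2 := z1 (deriv f) hc2 zz1
  obtain ⟨K0, hK0⟩ := (hcpt _ hz).exists_bound_of_continuous f.continuous
  obtain ⟨K1, hK1⟩ := (hcpt _ zz1).exists_bound_of_continuous hf1.continuous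
  obtain ⟨K2, hK2⟩ := (hcpt _ zz2).exists_bound_of_continuous hc2
  refine ⟨⟨f, deriv f, deriv (deriv f), max K0 (max K1 K2), h1d, h2d, hc2, hz, zz1, zz2,
    fun t => (hK0 t).trans (le_max_left _ _),
    fun t => (hK1 t).trans ((le_max_left _ _).trans (le_max_right _ _)),
    fun t => (hK2 t).trans ((le_max_right _ _).trans (le_max_right _ _)), fun t => f.nonneg⟩, ?_⟩
  intro t ht
  apply f.one_of_mem_closedBall
  rw [Metric.mem_closedBall, Real.dist_eq, abs_le]
  change -((b - a) / 2) ≤ _ ∧ _ ≤ (b - a) / 2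
  constructor <;> linarith [ht.1, ht.2]

end Sb

section Sc
open Real Set Filter Topology MeasureTheory

lemma an_bound {f : ℝ → ℝ} (hf : ∀ v > 0, AnalyticAt ℝ f v) (v1 v2 : ℝ) (h1 : 0 < v1) :
    ∃ B ≥ 0, ∀ v ∈ Icc v1 v2, |f v| ≤ B := by
  have hc : ContinuousOn f (Icc v1 v2) := fun v hv =>
    (hf v (h1.trans_le hv.1)).continuousAt.continuousWithinAt
  obtain ⟨B, hB⟩ := isCompact_Icc.exists_bound_of_continuousOn hc
  exact ⟨max B 0, le_max_right _ _, fun v hv => (hB v hv).trans (le_max_left _ _)⟩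

/-- second derivative test for the concrete phase -/
lemma vdc_phs (c : ℝ) (hc : 1 < c) (v1 v2 : ℝ) (h1 : 0 < v1) (h12 : v1 ≤ v2) :
    ∃ C > 0, ∀ X > 0, ∀ G ≥ 0, ∀ g g' : ℝ → ℝ,
      (∀ v ∈ Icc v1 v2, HasDerivAt g (g' v) v) → ContinuousOn g' (Icc v1 v2) →
      g v1 = 0 → g v2 = 0 → (∀ v ∈ Icc v1 v2, |g v| ≤ G) → (∀ v ∈ Icc v1 v2, |g' v| ≤ G) →
      ‖∫ v in v1..v2, (g v : ℂ) * ex (X * phs c v)‖ ≤ C * G * X ^ (-(1 / 2) : ℝ) := by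
  obtain ⟨p, r, hp, hr, hpos, hd, -⟩ := phase_facts c hc
  have hpos' : ∀ v ∈ Icc v1 v2, 0 < v := fun v hv => h1.trans_le hv.1
  have hpc : ContinuousOn p (Icc v1 v2) := fun v hv =>
    (hp v (hpos' v hv)).continuousAt.continuousWithinAt
  obtain ⟨v0, hv0, hmin⟩ := isCompact_Icc.exists_isMinOn (nonempty_Icc.mpr h12) hpc
  obtain ⟨B1, hB1, hb1⟩ := an_bound hp v1 v2 h1
  have hp' : ∀ v > 0, AnalyticAt ℝ (deriv p) v := fun v hv => (hp v hv).deriv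
  obtain ⟨B2, hB2, hb2⟩ := an_bound hp' v1 v2 h1
  obtain ⟨B3, hB3, hb3⟩ := an_bound (f := fun v => v - 1) (fun v hv => by fun_prop) v1 v2 h1
  refine vdc v1 v2 (p v0) (B1 + B2 + B3) h12 (hpos _ (hpos' v0 hv0)) (phs c) p (deriv p)
    (fun v hv => hd v (hpos' v hv)) (fun v hv => (hp v (hpos' v hv)).differentiableAt.hasDerivAt)
    (fun v hv => (hp' v (hpos' v hv)).continuousAt.continuousWithinAt)
    (fun v hv => hmin hv) ?_ ?_ ?_
  · intro v hv; linarith [hb1 v hv, le_abs_self (p v)]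
  · intro v hv; linarith [hb2 v hv]
  · intro v hv; linarith [hb3 v hv]

lemma phs_cont (c : ℝ) (hc : 1 < c) (v1 v2 : ℝ) (h1 : 0 < v1) : ContinuousOn (phs c) (Icc v1 v2) :=
  fun v hv => (phs_deriv c hc v (h1.trans_le hv.1)).continuousAt.continuousWithinAt

noncomputable def Bint (c : ℝ) (W : ℝ → ℝ) (v1 v2 t X : ℝ) : ℂ :=
  ∫ v in v1..v2, ((t * W (t * v) : ℝ) : ℂ) * ex (X * phs c v)

lemma Wt.comp1 {a b : ℝ} (w : Wt a b) (t v : ℝ) :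
    HasDerivAt (fun v => w.W (t * v)) (t * w.W1 (t * v)) v := by
  have h := (w.d1 (t * v)).comp v ((hasDerivAt_id v).const_mul t)
  refine h.congr_deriv ?_
  ring

lemma Wt.comp2 {a b : ℝ} (w : Wt a b) (t v : ℝ) :
    HasDerivAt (fun v => w.W1 (t * v)) (t * w.W2 (t * v)) v := by
  have h := (w.d2 (t * v)).comp v ((hasDerivAt_id v).const_mul t)
  refine h.congr_deriv ?_
  ring

lemma Wt.comp1' {a b : ℝ} (w : Wt a b) (t v : ℝ) :
    HasDerivAt (fun t => w.W (t * v)) (v * w.W1 (t * v)) t := by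
  have h := (w.d1 (t * v)).comp t ((hasDerivAt_id t).mul_const v)
  refine h.congr_deriv ?_
  ring

lemma Wt.comp2' {a b : ℝ} (w : Wt a b) (t v : ℝ) :
    HasDerivAt (fun t => w.W1 (t * v)) (v * w.W2 (t * v)) t := by
  have h := (w.d2 (t * v)).comp t ((hasDerivAt_id t).mul_const v)
  refine h.congr_deriv ?_
  ring

section
variable {a b : ℝ} (w : Wt a b) (c : ℝ) (hc : 1 < c) (ha : 0 < a) (hab : a < b)
  (τ1 τ2 : ℝ) (hτ1 : 0 < τ1) (hτ : τ1 ≤ τ2)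

include hτ1 ha in
lemma end1 (t : ℝ) (ht : t ∈ Icc τ1 τ2) : t * (a / τ2) ∉ Ioo a b := by
  intro h
  have h2 : 0 < τ2 := hτ1.trans_le (ht.1.trans ht.2)
  have : t * (a / τ2) ≤ τ2 * (a / τ2) := by
    have := ht.2
    gcongr
  rw [mul_div_cancel₀ _ h2.ne'] at this
  linarith [h.1]

include hτ1 ha hab in
lemma end2 (t : ℝ) (ht : t ∈ Icc τ1 τ2) : t * (b / τ1) ∉ Ioo a b := by
  intro h
  have hb : 0 < b := ha.trans hab
  have : τ1 * (b / τ1) ≤ t * (b / τ1) := by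
    have := ht.1
    gcongr
  rw [mul_div_cancel₀ _ hτ1.ne'] at this
  linarith [h.2]

include hc ha hab hτ1 hτ in
lemma B_bound : ∃ C > 0, ∀ X > 0, ∀ t ∈ Icc τ1 τ2,
    ‖Bint c w.W (a / τ2) (b / τ1) t X‖ ≤ C * X ^ (-(1 / 2) : ℝ) := by
  have hb : 0 < b := ha.trans hab
  have h2 : 0 < τ2 := hτ1.trans_le hτ
  have hv : a / τ2 ≤ b / τ1 := by gcongr
  obtain ⟨C, hC, H⟩ := vdc_phs c hc (a / τ2) (b / τ1) (by positivity) hv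
  have hK := w.K_nonneg
  set G : ℝ := τ2 * w.K + τ2 * (τ2 * w.K) with hG
  have hG0 : 0 ≤ G := by positivity
  refine ⟨C * G + 1, by positivity, ?_⟩
  intro X hX t ht
  have ht0 : 0 < t := hτ1.trans_le ht.1
  have ht2 := ht.2
  have := H X hX G hG0 (fun v => t * w.W (t * v)) (fun v => t * (t * w.W1 (t * v)))
    (fun v _ => (w.comp1 t v).const_mul t) (by
      have := w.c1
      fun_prop) (by simp [w.z0 _ (end1 ha τ1 τ2 hτ1 t ht)])
      (by simp [w.z0 _ (end2 ha hab τ1 τ2 hτ1 t ht)])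
      (by
        intro v _
        rw [abs_mul, abs_of_pos ht0]
        have := w.b0 (t * v)
        calc t * |w.W (t * v)| ≤ τ2 * w.K := by gcongr
          _ ≤ _ := by rw [hG]; have : 0 ≤ τ2 * (τ2 * w.K) := by positivity
                      linarith)
      (by
        intro v _
        rw [abs_mul, abs_mul, abs_of_pos ht0]
        have := w.b1 (t * v)
        calc t * (t * |w.W1 (t * v)|) ≤ τ2 * (τ2 * w.K) := by gcongr
          _ ≤ _ := by rw [hG]; have : 0 ≤ τ2 * w.K := by positivity
                      linarith)
  refine le_trans this ?_
  gcongr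
  linarith

include hc ha hab hτ1 hτ in
lemma B_lip_t : ∃ C > 0, ∀ X > 0, ∀ t ∈ Icc τ1 τ2, ∀ t' ∈ Icc τ1 τ2,
    ‖Bint c w.W (a / τ2) (b / τ1) t X - Bint c w.W (a / τ2) (b / τ1) t' X‖
      ≤ C * |t - t'| * X ^ (-(1 / 2) : ℝ) := by
  have hb : 0 < b := ha.trans hab
  have h2 : 0 < τ2 := hτ1.trans_le hτ
  have hv : a / τ2 ≤ b / τ1 := by gcongr
  have hv1 : 0 < a / τ2 := by positivity
  have hv2 : 0 < b / τ1 := by positivity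
  obtain ⟨C, hC, H⟩ := vdc_phs c hc (a / τ2) (b / τ1) (by positivity) hv
  have hK := w.K_nonneg
  set v2 := b / τ1 with hv2d
  set v1 := a / τ2 with hv1d
  set G : ℝ := (w.K + τ2 * (v2 * w.K)) + (2 * τ2 * w.K + τ2 ^ 2 * (v2 * w.K)) with hG
  have hG0 : 0 ≤ G := by positivity
  have hexc : ContinuousOn (fun v => phs c v) (Icc v1 v2) := phs_cont c hc v1 v2 hv1
  have hci : ∀ t X, IntervalIntegrable (fun v => ((t * w.W (t * v) : ℝ) : ℂ) * ex (X * phs c v))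
      volume v1 v2 := by
    intro t X
    apply ContinuousOn.intervalIntegrable
    rw [uIcc_of_le hv]
    have h1 : Continuous (fun v => ((t * w.W (t * v) : ℝ) : ℂ)) := by
      have := w.c0
      fun_prop
    exact h1.continuousOn.mul (ex_continuous.comp_continuousOn (continuousOn_const.mul hexc))
  refine ⟨C * G + 1, by positivity, ?_⟩
  intro X hX t ht t' ht'
  have hL0 : ∀ v ∈ Icc v1 v2, |t * w.W (t * v) - t' * w.W (t' * v)| ≤ G * |t - t'| := by
    intro v hv
    have hv0 : 0 < v := hv1.trans_le hv.1
    have := (convex_Icc τ1 τ2).norm_image_sub_le_of_norm_hasDerivWithin_le (C := G)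
      (f := fun s => s * w.W (s * v)) (f' := fun s => 1 * w.W (s * v) + s * (v * w.W1 (s * v)))
      (x := t') (y := t)
      (fun s _ => ((hasDerivAt_id s).mul (w.comp1' s v)).hasDerivWithinAt) (by
        intro s hs
        have hs0 : 0 < s := hτ1.trans_le hs.1
        rw [Real.norm_eq_abs]
        refine (abs_add_le _ _).trans ?_
        rw [one_mul, abs_mul, abs_mul, abs_of_pos hs0, abs_of_pos hv0]
        have e0 := w.b0 (s * v)
        have e1 := w.b1 (s * v)
        have e2 := hs.2
        have e3 := hv.2
        calc |w.W (s * v)| + s * (v * |w.W1 (s * v)|) ≤ w.K + τ2 * (v2 * w.K) := by gcongr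
          _ ≤ _ := by rw [hG]; have : 0 ≤ (2 * τ2 * w.K + τ2 ^ 2 * (v2 * w.K)) := by positivity
                      linarith) ht' ht
    simpa using this
  have hL1 : ∀ v ∈ Icc v1 v2, |t * (t * w.W1 (t * v)) - t' * (t' * w.W1 (t' * v))| ≤ G * |t - t'| := by
    intro v hv
    have hv0 : 0 < v := hv1.trans_le hv.1
    have := (convex_Icc τ1 τ2).norm_image_sub_le_of_norm_hasDerivWithin_le (C := G)
      (f := fun s => s * (s * w.W1 (s * v)))
      (f' := fun s => 1 * (s * w.W1 (s * v)) + s * (1 * w.W1 (s * v) + s * (v * w.W2 (s * v))))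
      (x := t') (y := t)
      (fun s _ => ((hasDerivAt_id s).mul ((hasDerivAt_id s).mul (w.comp2' s v))).hasDerivWithinAt) (by
        intro s hs
        have hs0 : 0 < s := hτ1.trans_le hs.1
        rw [Real.norm_eq_abs]
        have e : 1 * (s * w.W1 (s * v)) + s * (1 * w.W1 (s * v) + s * (v * w.W2 (s * v))) =
          2 * s * w.W1 (s * v) + s ^ 2 * (v * w.W2 (s * v)) := by ring
        rw [e]
        refine (abs_add_le _ _).trans ?_
        rw [abs_mul, abs_mul (s ^ 2), abs_mul v, abs_of_pos (by positivity : 0 < 2 * s),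
          abs_of_pos (by positivity : 0 < s ^ 2), abs_of_pos hv0]
        have e0 := w.b1 (s * v)
        have e1 := w.b2 (s * v)
        have e2 := hs.2
        have e3 := hv.2
        calc 2 * s * |w.W1 (s * v)| + s ^ 2 * (v * |w.W2 (s * v)|)
            ≤ 2 * τ2 * w.K + τ2 ^ 2 * (v2 * w.K) := by gcongr
          _ ≤ _ := by rw [hG]; have : 0 ≤ (w.K + τ2 * (v2 * w.K)) := by positivity
                      linarith) ht' ht
    simpa using this
  have := H X hX (G * |t - t'|) (by positivity) (fun v => t * w.W (t * v) - t' * w.W (t' * v))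
    (fun v => t * (t * w.W1 (t * v)) - t' * (t' * w.W1 (t' * v)))
    (fun v _ => ((w.comp1 t v).const_mul t).sub ((w.comp1 t' v).const_mul t')) (by
      have := w.c1
      fun_prop)
      (by simp [hv1d, w.z0 _ (end1 ha τ1 τ2 hτ1 t ht), w.z0 _ (end1 ha τ1 τ2 hτ1 t' ht')])
      (by simp [hv2d, w.z0 _ (end2 ha hab τ1 τ2 hτ1 t ht), w.z0 _ (end2 ha hab τ1 τ2 hτ1 t' ht')])
      hL0 hL1
  unfold Bint
  rw [← intervalIntegral.integral_sub (hci t X) (hci t' X)]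
  refine le_trans (le_of_eq ?_) (this.trans ?_)
  · congr 2
    ext v
    push_cast; ring
  · rw [← mul_assoc]
    gcongr
    linarith

include hc ha hab hτ1 hτ in
/-- gain from the vanishing of the phase at the stationary point -/
lemma B_phi : ∃ C > 0, ∀ X > 0, ∀ t ∈ Icc τ1 τ2,
    ‖∫ v in (a / τ2)..(b / τ1), ((t * w.W (t * v) : ℝ) : ℂ) * (phs c v : ℂ) * ex (X * phs c v)‖
      ≤ C * X ^ (-(3 / 2) : ℝ) := by
  have hb : 0 < b := ha.trans hab
  have h2 : 0 < τ2 := hτ1.trans_le hτ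
  have hv : a / τ2 ≤ b / τ1 := by gcongr
  have hv1 : 0 < a / τ2 := by positivity
  obtain ⟨C, hC, H⟩ := vdc_phs c hc (a / τ2) (b / τ1) (by positivity) hv
  obtain ⟨p, r, hp, hr, hpos, hd, hfac⟩ := phase_facts c hc
  have hK := w.K_nonneg
  set v2 := b / τ1 with hv2d
  set v1 := a / τ2 with hv1d
  have hr1 : ∀ v > 0, AnalyticAt ℝ (deriv r) v := fun v hv => (hr v hv).deriv
  have hr2 : ∀ v > 0, AnalyticAt ℝ (deriv (deriv r)) v := fun v hv => (hr1 v hv).deriv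
  obtain ⟨R0, hR0, hb0⟩ := an_bound hr v1 v2 hv1
  obtain ⟨R1, hR1, hb1⟩ := an_bound hr1 v1 v2 hv1
  obtain ⟨R2, hR2, hb2⟩ := an_bound hr2 v1 v2 hv1
  have hpos' : ∀ v ∈ Icc v1 v2, 0 < v := fun v hv => hv1.trans_le hv.1
  set G1 : ℝ := τ2 ^ 2 * w.K * R0 + τ2 * w.K * R1 with hG1
  set G2 : ℝ := τ2 ^ 3 * w.K * R0 + τ2 ^ 2 * w.K * R1 + (τ2 ^ 2 * w.K * R1 + τ2 * w.K * R2) with hG2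
  have hG10 : 0 ≤ G1 := by positivity
  have hG20 : 0 ≤ G2 := by positivity
  refine ⟨C * (G1 + G2) + 1, by positivity, ?_⟩
  intro X hX t ht
  have ht0 : 0 < t := hτ1.trans_le ht.1
  have ht2 := ht.2
  set g0 : ℝ → ℝ := fun v => t * w.W (t * v) * r v with hg0
  set g1 : ℝ → ℝ := fun v => t * (t * w.W1 (t * v)) * r v + t * w.W (t * v) * deriv r v with hg1
  set g2 : ℝ → ℝ := fun v => (t * (t * (t * w.W2 (t * v))) * r v + t * (t * w.W1 (t * v)) * deriv r v) +
    (t * (t * w.W1 (t * v)) * deriv r v + t * w.W (t * v) * deriv (deriv r) v) with hg2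
  have hrd : ∀ v ∈ Icc v1 v2, HasDerivAt r (deriv r v) v := fun v hv =>
    (hr v (hpos' v hv)).differentiableAt.hasDerivAt
  have hrd1 : ∀ v ∈ Icc v1 v2, HasDerivAt (deriv r) (deriv (deriv r) v) v := fun v hv =>
    (hr1 v (hpos' v hv)).differentiableAt.hasDerivAt
  have d0 : ∀ v ∈ Icc v1 v2, HasDerivAt g0 (g1 v) v := fun v hv =>
    ((w.comp1 t v).const_mul t).mul (hrd v hv)
  have d1 : ∀ v ∈ Icc v1 v2, HasDerivAt g1 (g2 v) v := fun v hv =>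
    ((((w.comp2 t v).const_mul t).const_mul t).mul (hrd v hv)).add
      (((w.comp1 t v).const_mul t).mul (hrd1 v hv))
  have rc0 : ContinuousOn r (Icc v1 v2) := fun v hv => (hr v (hpos' v hv)).continuousAt.continuousWithinAt
  have rc1 : ContinuousOn (deriv r) (Icc v1 v2) := fun v hv =>
    (hr1 v (hpos' v hv)).continuousAt.continuousWithinAt
  have rc2 : ContinuousOn (deriv (deriv r)) (Icc v1 v2) := fun v hv =>
    (hr2 v (hpos' v hv)).continuousAt.continuousWithinAt
  have gc2 : ContinuousOn g2 (Icc v1 v2) := by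
    have := w.c0
    have := w.c1
    have := w.c2
    simp only [hg2]
    fun_prop
  have gc1 : ContinuousOn g1 (Icc v1 v2) := fun v hv => (d1 v hv).continuousAt.continuousWithinAt
  have e1z := end1 (b := b) ha τ1 τ2 hτ1 t ht
  have e2z := end2 ha hab τ1 τ2 hτ1 t ht
  have b1 : ∀ v ∈ Icc v1 v2, |g1 v| ≤ G1 := by
    intro v hv
    refine (abs_add_le _ _).trans ?_
    simp only [abs_mul, abs_of_pos ht0]
    have q0 := w.b0 (t * v)
    have q1 := w.b1 (t * v)
    have q3 := hb0 v hv
    have q4 := hb1 v hv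
    calc t * (t * |w.W1 (t * v)|) * |r v| + t * |w.W (t * v)| * |deriv r v| ≤
      τ2 * (τ2 * w.K) * R0 + τ2 * w.K * R1 := by gcongr
      _ = _ := by rw [hG1]; ring
  have b2 : ∀ v ∈ Icc v1 v2, |g2 v| ≤ G2 := by
    intro v hv
    refine (abs_add_le _ _).trans ((add_le_add (abs_add_le _ _) (abs_add_le _ _)).trans ?_)
    simp only [abs_mul, abs_of_pos ht0]
    have q0 := w.b0 (t * v)
    have q1 := w.b1 (t * v)
    have q2 := w.b2 (t * v)
    have q3 := hb0 v hv
    have q4 := hb1 v hv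
    have q5 := hb2 v hv
    calc (t * (t * (t * |w.W2 (t * v)|)) * |r v| + t * (t * |w.W1 (t * v)|) * |deriv r v|) +
        (t * (t * |w.W1 (t * v)|) * |deriv r v| + t * |w.W (t * v)| * |deriv (deriv r) v|) ≤
      (τ2 * (τ2 * (τ2 * w.K)) * R0 + τ2 * (τ2 * w.K) * R1) + (τ2 * (τ2 * w.K) * R1 + τ2 * w.K * R2) := by gcongr
      _ = _ := by rw [hG2]; ring
  have hmain := H X hX (G1 + G2) (by positivity) g1 g2 d1 gc2
    (by simp only [hg1]; rw [w.z0 _ e1z, w.z1 _ e1z]; ring)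
    (by simp only [hg1]; rw [w.z0 _ e2z, w.z1 _ e2z]; ring)
    (fun v hv => (b1 v hv).trans (by linarith)) (fun v hv => (b2 v hv).trans (by linarith))
  have hφc : ContinuousOn (fun v => phs c v) (Icc v1 v2) := phs_cont c hc v1 v2 hv1
  have hexc : ContinuousOn (fun v => ex (X * phs c v)) (Icc v1 v2) :=
    ex_continuous.comp_continuousOn (continuousOn_const.mul hφc)
  have c1 : ContinuousOn (fun v => (g1 v : ℂ) * ex (X * phs c v)) (Icc v1 v2) :=
    (Complex.continuous_ofReal.comp_continuousOn gc1).mul hexc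
  have c2 : ContinuousOn (fun v => ((t * w.W (t * v) : ℝ) : ℂ) * (phs c v : ℂ) * ex (X * phs c v))
      (Icc v1 v2) := by
    refine ContinuousOn.mul (ContinuousOn.mul ?_ ?_) hexc
    · have := w.c0
      fun_prop
    · exact Complex.continuous_ofReal.comp_continuousOn hφc
  have c3 : ContinuousOn (fun v => ((2 * π * X : ℝ) : ℂ) * Complex.I *
      (((t * w.W (t * v) : ℝ) : ℂ) * (phs c v : ℂ) * ex (X * phs c v))) (Icc v1 v2) :=
    continuousOn_const.mul c2
  have hDer : ∀ v ∈ Icc v1 v2, HasDerivAt (fun v => (g0 v : ℂ) * ex (X * phs c v))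
      ((g1 v : ℂ) * ex (X * phs c v) + ((2 * π * X : ℝ) : ℂ) * Complex.I *
      (((t * w.W (t * v) : ℝ) : ℂ) * (phs c v : ℂ) * ex (X * phs c v))) v := by
    intro v hv
    have := (d0 v hv).ofReal_comp.mul (ex_hasDerivAt ((hd v (hpos' v hv)).const_mul X))
    refine this.congr_deriv ?_
    rw [hfac v (hpos' v hv)]
    simp only [hg0]
    push_cast
    ring
  have hF := intervalIntegral.integral_eq_sub_of_hasDerivAt (a := v1) (b := v2)
    (by rw [uIcc_of_le hv]; exact hDer)
    (by apply ContinuousOn.intervalIntegrable; rw [uIcc_of_le hv]; exact c1.add c3)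
  rw [intervalIntegral.integral_add
    (by apply ContinuousOn.intervalIntegrable; rw [uIcc_of_le hv]; exact c1)
    (by apply ContinuousOn.intervalIntegrable; rw [uIcc_of_le hv]; exact c3),
    intervalIntegral.integral_const_mul] at hF
  have hz : (g0 v2 : ℂ) * ex (X * phs c v2) - (g0 v1 : ℂ) * ex (X * phs c v1) = 0 := by
    simp only [hg0]; rw [w.z0 _ e1z, w.z0 _ e2z]; simp
  rw [hz] at hF
  have hnorm := congrArg norm (eq_neg_of_add_eq_zero_right hF)
  rw [norm_neg, norm_mul, norm_mul, Complex.norm_I, mul_one, Complex.norm_real, Real.norm_eq_abs,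
    abs_of_pos (by positivity : 0 < 2 * π * X)] at hnorm
  have hX3 : X ^ (-(3 / 2) : ℝ) = X⁻¹ * X ^ (-(1 / 2) : ℝ) := by
    rw [← Real.rpow_neg_one, ← Real.rpow_add hX]; norm_num
  rw [hX3]
  have hpi : 1 ≤ 2 * π := by linarith [Real.pi_gt_three]
  set N := ‖∫ v in v1..v2, ((t * w.W (t * v) : ℝ) : ℂ) * (phs c v : ℂ) * ex (X * phs c v)‖ with hN
  have hN0 : 0 ≤ N := norm_nonneg _
  have h5 : X * N ≤ C * (G1 + G2) * X ^ (-(1 / 2) : ℝ) := by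
    calc X * N ≤ 2 * π * X * N := by
          have : 0 ≤ X * N := by positivity
          nlinarith
      _ ≤ _ := by rw [hnorm]; exact hmain
  have h6 : 0 < X ^ (-(1 / 2) : ℝ) := by positivity
  calc N = X⁻¹ * (X * N) := by field_simp
    _ ≤ X⁻¹ * (C * (G1 + G2) * X ^ (-(1 / 2) : ℝ)) := by gcongr
    _ ≤ X⁻¹ * ((C * (G1 + G2) + 1) * X ^ (-(1 / 2) : ℝ)) := by gcongr; linarith
    _ = _ := by ring

include hc ha hab hτ1 hτ in
lemma B_lip_X : ∃ C > 0, ∀ Y > 0, ∀ X ≥ Y, ∀ X' ≥ Y, ∀ t ∈ Icc τ1 τ2,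
    ‖Bint c w.W (a / τ2) (b / τ1) t X - Bint c w.W (a / τ2) (b / τ1) t X'‖
      ≤ C * |X - X'| * Y ^ (-(3 / 2) : ℝ) := by
  have hb : 0 < b := ha.trans hab
  have h2 : 0 < τ2 := hτ1.trans_le hτ
  have hv : a / τ2 ≤ b / τ1 := by gcongr
  have hv1 : 0 < a / τ2 := by positivity
  obtain ⟨C, hC, H⟩ := B_phi w c hc ha hab τ1 τ2 hτ1 hτ
  set v2 := b / τ1 with hv2d
  set v1 := a / τ2 with hv1d
  refine ⟨2 * π * C, by positivity, ?_⟩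
  intro Y hY X hX X' hX' t ht
  have hφc : ContinuousOn (fun v => phs c v) (Icc v1 v2) := phs_cont c hc v1 v2 hv1
  have hexc : ∀ X, ContinuousOn (fun v => ex (X * phs c v)) (Icc v1 v2) := fun X =>
    ex_continuous.comp_continuousOn (continuousOn_const.mul hφc)
  have hWc : ContinuousOn (fun v => ((t * w.W (t * v) : ℝ) : ℂ)) (Icc v1 v2) := by
    have := w.c0
    fun_prop
  have hφcc : ContinuousOn (fun v => (phs c v : ℂ)) (Icc v1 v2) :=
    Complex.continuous_ofReal.comp_continuousOn hφc
  have hder : ∀ x : ℝ, HasDerivAt (fun x => Bint c w.W v1 v2 t x)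
      (∫ v in v1..v2, ((2 * π : ℝ) : ℂ) * Complex.I *
        (((t * w.W (t * v) : ℝ) : ℂ) * (phs c v : ℂ) * ex (x * phs c v))) x := by
    intro x
    have hcF : ∀ x, ContinuousOn (fun v => ((t * w.W (t * v) : ℝ) : ℂ) * ex (x * phs c v)) (Icc v1 v2) :=
      fun x => hWc.mul (hexc x)
    have hcF' : ∀ x, ContinuousOn (fun v => ((2 * π : ℝ) : ℂ) * Complex.I *
        (((t * w.W (t * v) : ℝ) : ℂ) * (phs c v : ℂ) * ex (x * phs c v))) (Icc v1 v2) :=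
      fun x => continuousOn_const.mul ((hWc.mul hφcc).mul (hexc x))
    have hii : ∀ {f : ℝ → ℂ}, ContinuousOn f (Icc v1 v2) → IntervalIntegrable f volume v1 v2 := by
      intro f hf
      apply ContinuousOn.intervalIntegrable; rw [uIcc_of_le hv]; exact hf
    refine (intervalIntegral.hasDerivAt_integral_of_dominated_loc_of_deriv_le
      (F := fun x v => ((t * w.W (t * v) : ℝ) : ℂ) * ex (x * phs c v))
      (F' := fun x v => ((2 * π : ℝ) : ℂ) * Complex.I *
        (((t * w.W (t * v) : ℝ) : ℂ) * (phs c v : ℂ) * ex (x * phs c v)))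
      (bound := fun v => ‖((2 * π : ℝ) : ℂ) * Complex.I *
        (((t * w.W (t * v) : ℝ) : ℂ) * (phs c v : ℂ) * ex (0 * phs c v))‖)
      (univ_mem : (univ : Set ℝ) ∈ 𝓝 x) ?_ (hii (hcF x)) ?_ ?_ ?_ ?_).2
    · filter_upwards with y
      exact (hii (hcF y)).def'.aestronglyMeasurable
    · exact (hii (hcF' x)).def'.aestronglyMeasurable
    · filter_upwards with v _ y _
      simp only [norm_mul, ex_norm, le_refl]
    · exact (hii (hcF' 0)).norm
    · filter_upwards with v _ y _
      have h1 : HasDerivAt (fun y : ℝ => y * phs c v) (phs c v) y := by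
        simpa using (hasDerivAt_id y).mul_const (phs c v)
      have := (ex_hasDerivAt h1).const_mul (((t * w.W (t * v) : ℝ) : ℂ))
      refine this.congr_deriv ?_
      push_cast; ring
  have := (convex_Ici Y).norm_image_sub_le_of_norm_hasDerivWithin_le (C := 2 * π * C * Y ^ (-(3 / 2) : ℝ))
    (f := fun x => Bint c w.W v1 v2 t x) (x := X') (y := X)
    (fun x _ => (hder x).hasDerivWithinAt) (by
      intro x hx
      have hx0 : 0 < x := hY.trans_le hx
      rw [intervalIntegral.integral_const_mul, norm_mul, norm_mul, Complex.norm_I, Complex.norm_real,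
        Real.norm_eq_abs, abs_of_pos (by positivity : 0 < 2 * π), mul_one, mul_assoc (2 * π) C]
      gcongr
      refine (H x hx0 t ht).trans ?_
      gcongr ?_ * ?_
      exact Real.rpow_le_rpow_of_nonpos hY hx (by norm_num)) hX' hX
  refine this.trans (le_of_eq ?_)
  rw [Real.norm_eq_abs]; ring
end

end Sc

section Sd
open Real Set Filter Topology MeasureTheory

lemma nonstat_abs {a b : ℝ} (w : Wt a b) (hab : a ≤ b) (m B : ℝ) (hm : 0 < m) (hB : 0 ≤ B) :
    ∃ C > 0, ∀ R > 0, ∀ Ψ p p1 p2 : ℝ → ℝ,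
      (∀ t ∈ Icc a b, HasDerivAt Ψ (R * p t) t) → (∀ t ∈ Icc a b, HasDerivAt p (p1 t) t) →
      (∀ t ∈ Icc a b, HasDerivAt p1 (p2 t) t) → ContinuousOn p2 (Icc a b) →
      (∀ t ∈ Icc a b, m ≤ |p t|) → (∀ t ∈ Icc a b, |p t| ≤ B) → (∀ t ∈ Icc a b, |p1 t| ≤ B) →
      (∀ t ∈ Icc a b, |p2 t| ≤ B) →
      ‖∫ t in a..b, (w.W t : ℂ) * ex (Ψ t)‖ ≤ C * (R ^ 2)⁻¹ := by
  have hK := w.K_nonneg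
  set S : ℝ := (6 * w.K * B ^ 3 / m ^ 4 * B + 2 * w.K * B / m ^ 2 * B) / m ^ 2 with hS
  have hS0 : 0 ≤ S := by positivity
  refine ⟨S * (b - a) + 1, by have : 0 ≤ b - a := by linarith
                              positivity, ?_⟩
  intro R hR Ψ p p1 p2 hΨ hp hp1 hp2 hpm hpB hp1B hp2B
  have hpne : ∀ t ∈ Icc a b, p t ≠ 0 := fun t ht h => by
    have := hpm t ht; rw [h, abs_zero] at this; linarith
  have pc : ContinuousOn p (Icc a b) := fun v hv => (hp v hv).continuousAt.continuousWithinAt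
  have p1c : ContinuousOn p1 (Icc a b) := fun v hv => (hp1 v hv).continuousAt.continuousWithinAt
  have Ψc : ContinuousOn Ψ (Icc a b) := fun v hv => (hΨ v hv).continuousAt.continuousWithinAt
  have exc : ContinuousOn (fun t => ex (Ψ t)) (Icc a b) := ex_continuous.comp_continuousOn Ψc
  -- general step
  have step : ∀ f u u' : ℝ → ℝ, (∀ t ∈ Icc a b, f t = u t * p t) →
      (∀ t ∈ Icc a b, HasDerivAt u (u' t) t) → ContinuousOn u' (Icc a b) → u a = 0 → u b = 0 →
      R * ‖∫ t in a..b, (f t : ℂ) * ex (Ψ t)‖ ≤ ‖∫ t in a..b, (u' t : ℂ) * ex (Ψ t)‖ := by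
    intro f u u' hf hu hu' hua hub
    have uc : ContinuousOn u (Icc a b) := fun v hv => (hu v hv).continuousAt.continuousWithinAt
    have c1 : ContinuousOn (fun t => (u' t : ℂ) * ex (Ψ t)) (Icc a b) :=
      (Complex.continuous_ofReal.comp_continuousOn hu').mul exc
    have c2 : ContinuousOn (fun t => ((2 * π * R : ℝ) : ℂ) * Complex.I * ((f t : ℂ) * ex (Ψ t)))
        (Icc a b) := by
      refine continuousOn_const.mul (ContinuousOn.mul ?_ exc)
      refine Complex.continuous_ofReal.comp_continuousOn ?_
      exact (uc.mul pc).congr hf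
    have hD : ∀ t ∈ Icc a b, HasDerivAt (fun t => (u t : ℂ) * ex (Ψ t))
        ((u' t : ℂ) * ex (Ψ t) + ((2 * π * R : ℝ) : ℂ) * Complex.I * ((f t : ℂ) * ex (Ψ t))) t := by
      intro t ht
      have := (hu t ht).ofReal_comp.mul (ex_hasDerivAt (hΨ t ht))
      refine this.congr_deriv ?_
      rw [hf t ht]; push_cast; ring
    have hF := intervalIntegral.integral_eq_sub_of_hasDerivAt (a := a) (b := b)
      (by rw [uIcc_of_le hab]; exact hD)
      (by apply ContinuousOn.intervalIntegrable; rw [uIcc_of_le hab]; exact c1.add c2)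
    rw [intervalIntegral.integral_add
      (by apply ContinuousOn.intervalIntegrable; rw [uIcc_of_le hab]; exact c1)
      (by apply ContinuousOn.intervalIntegrable; rw [uIcc_of_le hab]; exact c2),
      intervalIntegral.integral_const_mul, hua, hub] at hF
    simp only [Complex.ofReal_zero, zero_mul, sub_zero] at hF
    have hnorm := congrArg norm (eq_neg_of_add_eq_zero_right hF)
    rw [norm_neg, norm_mul, norm_mul, Complex.norm_I, mul_one, Complex.norm_real, Real.norm_eq_abs,
      abs_of_pos (by positivity : 0 < 2 * π * R)] at hnorm
    rw [← hnorm]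
    have hpi : 1 ≤ 2 * π := by linarith [Real.pi_gt_three]
    have : 0 ≤ R * ‖∫ t in a..b, (f t : ℂ) * ex (Ψ t)‖ := by positivity
    nlinarith
  set u1 : ℝ → ℝ := fun t => (w.W1 t * p t - w.W t * p1 t) / p t ^ 2 with hu1
  set u2 : ℝ → ℝ := fun t => (((w.W2 t * p t + w.W1 t * p1 t) - (w.W1 t * p1 t + w.W t * p2 t)) * p t ^ 2 -
    (w.W1 t * p t - w.W t * p1 t) * (2 * p t * p1 t)) / (p t ^ 2) ^ 2 with hu2
  set u3 : ℝ → ℝ := fun t => (u2 t * p t - u1 t * p1 t) / p t ^ 2 with hu3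
  have d0 : ∀ t ∈ Icc a b, HasDerivAt (fun t => w.W t / p t) (u1 t) t := fun t ht =>
    (w.d1 t).div (hp t ht) (hpne t ht)
  have d1 : ∀ t ∈ Icc a b, HasDerivAt u1 (u2 t) t := by
    intro t ht
    have hq : HasDerivAt (fun t => p t ^ 2) (2 * p t * p1 t) t := by
      refine ((hp t ht).pow 2).congr_deriv ?_
      simp
    exact (((w.d2 t).mul (hp t ht)).sub ((w.d1 t).mul (hp1 t ht))).div hq (pow_ne_zero 2 (hpne t ht))
  have d2 : ∀ t ∈ Icc a b, HasDerivAt (fun t => u1 t / p t) (u3 t) t := fun t ht =>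
    (d1 t ht).div (hp t ht) (hpne t ht)
  have w0c := w.c0
  have w1c := w.c1
  have w2c := w.c2
  have u1c : ContinuousOn u1 (Icc a b) := fun v hv => (d1 v hv).continuousAt.continuousWithinAt
  have u2c : ContinuousOn u2 (Icc a b) := by
    refine ContinuousOn.div ?_ (by fun_prop) (fun t ht => pow_ne_zero 2 (pow_ne_zero 2 (hpne t ht)))
    fun_prop
  have u3c : ContinuousOn u3 (Icc a b) := by
    refine ContinuousOn.div ?_ (by fun_prop) (fun t ht => (pow_ne_zero 2 (hpne t ht)))
    fun_prop
  have za : a ∉ Ioo a b := by simp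
  have zb : b ∉ Ioo a b := by simp
  have s1 := step w.W (fun t => w.W t / p t) u1 (fun t ht => by
    have := hpne t ht; field_simp) d0 u1c (by simp [w.z0 _ za]) (by simp [w.z0 _ zb])
  have s2 := step u1 (fun t => u1 t / p t) u3 (fun t ht => by
    have := hpne t ht; field_simp) d2 u3c (by simp [hu1, w.z0 _ za, w.z1 _ za])
      (by simp [hu1, w.z0 _ zb, w.z1 _ zb])
  have hu3b : ∀ t ∈ Icc a b, |u3 t| ≤ S := by
    intro t ht
    have k0 := w.b0 t
    have k1 := w.b1 t
    have k2 := w.b2 t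
    have q0 := hpB t ht
    have q1 := hp1B t ht
    have q2 := hp2B t ht
    have q := hpm t ht
    have n1 : |w.W1 t * p t - w.W t * p1 t| ≤ 2 * w.K * B := by
      calc _ ≤ |w.W1 t * p t| + |w.W t * p1 t| := abs_sub _ _
        _ = |w.W1 t| * |p t| + |w.W t| * |p1 t| := by rw [abs_mul, abs_mul]
        _ ≤ w.K * B + w.K * B := by gcongr
        _ = _ := by ring
    have n2 : |w.W2 t * p t - w.W t * p2 t| ≤ 2 * w.K * B := by
      calc _ ≤ |w.W2 t * p t| + |w.W t * p2 t| := abs_sub _ _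
        _ = |w.W2 t| * |p t| + |w.W t| * |p2 t| := by rw [abs_mul, abs_mul]
        _ ≤ w.K * B + w.K * B := by gcongr
        _ = _ := by ring
    have m1 : |u1 t| ≤ 2 * w.K * B / m ^ 2 := by
      simp only [hu1]
      rw [abs_div, abs_pow]
      gcongr
    have m2 : |u2 t| ≤ 6 * w.K * B ^ 3 / m ^ 4 := by
      simp only [hu2]
      rw [abs_div, abs_pow, abs_pow, ← pow_mul]
      have e : (w.W2 t * p t + w.W1 t * p1 t) - (w.W1 t * p1 t + w.W t * p2 t) =
        w.W2 t * p t - w.W t * p2 t := by ring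
      rw [e]
      have : |(w.W2 t * p t - w.W t * p2 t) * p t ^ 2 -
    (w.W1 t * p t - w.W t * p1 t) * (2 * p t * p1 t)| ≤ 6 * w.K * B ^ 3 := by
        calc _ ≤ |(w.W2 t * p t - w.W t * p2 t) * p t ^ 2| +
              |(w.W1 t * p t - w.W t * p1 t) * (2 * p t * p1 t)| := abs_sub _ _
          _ = |w.W2 t * p t - w.W t * p2 t| * |p t| ^ 2 +
              |w.W1 t * p t - w.W t * p1 t| * (2 * |p t| * |p1 t|) := by
              rw [abs_mul, abs_mul, abs_mul, abs_mul, abs_pow, abs_two]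
          _ ≤ (2 * w.K * B) * B ^ 2 + (2 * w.K * B) * (2 * B * B) := by gcongr
          _ = _ := by ring
      gcongr
    simp only [hu3]
    rw [abs_div, abs_pow, hS]
    have : |u2 t * p t - u1 t * p1 t| ≤ 6 * w.K * B ^ 3 / m ^ 4 * B + 2 * w.K * B / m ^ 2 * B := by
      calc _ ≤ |u2 t * p t| + |u1 t * p1 t| := abs_sub _ _
        _ = |u2 t| * |p t| + |u1 t| * |p1 t| := by rw [abs_mul, abs_mul]
        _ ≤ _ := by gcongr
    gcongr
  have hlast : ‖∫ t in a..b, (u3 t : ℂ) * ex (Ψ t)‖ ≤ S * (b - a) := by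
    have := intervalIntegral.norm_integral_le_of_norm_le_const (a := a) (b := b) (C := S)
      (f := fun t => (u3 t : ℂ) * ex (Ψ t)) (by
        intro t ht
        rw [uIoc_of_le hab] at ht
        rw [norm_mul, ex_norm, mul_one, Complex.norm_real]
        exact hu3b t ⟨ht.1.le, ht.2⟩)
    rwa [abs_of_nonneg (by linarith)] at this
  rw [← div_eq_mul_inv, le_div_iff₀ (by positivity)]
  calc _ = R * (R * ‖∫ t in a..b, (w.W t : ℂ) * ex (Ψ t)‖) := by ring
    _ ≤ R * ‖∫ t in a..b, (u1 t : ℂ) * ex (Ψ t)‖ := by gcongr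
    _ ≤ _ := by linarith

noncomputable def Jint (c : ℝ) (W : ℝ → ℝ) (x ξ : ℝ) : ℂ := ∫ t : ℝ, (W t : ℂ) * ex (x * t ^ c - ξ * t)

lemma Jint_interval {a b : ℝ} (w : Wt a b) (c x ξ : ℝ) :
    Jint c w.W x ξ = ∫ t in a..b, (w.W t : ℂ) * ex (x * t ^ c - ξ * t) := by
  unfold Jint
  rw [intervalIntegral.integral_eq_integral_of_support_subset]
  intro t ht
  by_contra h
  apply ht
  have : w.W t = 0 := w.z0 t (fun h' => h ⟨h'.1, h'.2.le⟩)
  simp [this]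

lemma rpow_bd (s a b : ℝ) (ha : 0 < a) : ∃ B ≥ 0, ∀ t ∈ Icc a b, t ^ s ≤ B := by
  obtain ⟨B, hB, h⟩ := an_bound (rpow_an s) a b ha
  exact ⟨B, hB, fun t ht => (le_abs_self _).trans (h t ht)⟩

lemma J_nonstat {a b : ℝ} (w : Wt a b) (c : ℝ) (hc : 1 < c) (ha : 0 < a) (hab : a < b) :
    ∃ C > 0, ∀ T > 0, ∀ x ∈ Icc T (2 * T), ∀ ξ : ℝ,
      (ξ < c * a ^ (c - 1) / 2 * T ∨ 4 * c * b ^ (c - 1) * T < ξ) →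
      ‖Jint c w.W x ξ‖ ≤ C * ((T + |ξ|) ^ 2)⁻¹ := by
  have hb : 0 < b := ha.trans hab
  set C1 := c * a ^ (c - 1) / 2 with hC1
  set C2 := 4 * c * b ^ (c - 1) with hC2
  have hC1p : 0 < C1 := by positivity
  have hC2p : 0 < C2 := by positivity
  obtain ⟨Ba, hBa, hba⟩ := rpow_bd (c - 1) a b ha
  obtain ⟨Bb, hBb, hbb⟩ := rpow_bd (c - 2) a b ha
  obtain ⟨Bc, hBc, hbc⟩ := rpow_bd (c - 3) a b ha
  set B := 2 * (c * Ba) + 1 + 2 * (c * (c - 1) * Bb) + 2 * (c * (c - 1) * |c - 2| * Bc) with hB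
  have hc1 : 0 < c - 1 := by linarith
  have t1 : 0 ≤ c * Ba := by positivity
  have t2 : 0 ≤ c * (c - 1) * Bb := by positivity
  have t3 : 0 ≤ c * (c - 1) * |c - 2| * Bc := by positivity
  have hB0 : 0 ≤ B := by rw [hB]; linarith
  set m := min (min (C1 / (1 + C1)) 1) (min (2 * C1) ((1 / C2 + 1)⁻¹ / 2)) with hm
  have hmp : 0 < m := by rw [hm]; positivity
  have hm1 : m ≤ C1 / (1 + C1) := (min_le_left _ _).trans (min_le_left _ _)
  have hm2 : m ≤ 1 := (min_le_left _ _).trans (min_le_right _ _)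
  have hm3 : m ≤ 2 * C1 := (min_le_right _ _).trans (min_le_left _ _)
  have hm4 : m ≤ (1 / C2 + 1)⁻¹ / 2 := (min_le_right _ _).trans (min_le_right _ _)
  obtain ⟨C, hC, H⟩ := nonstat_abs w hab.le m B hmp hB0
  refine ⟨C, hC, ?_⟩
  intro T hT x hx ξ hξ
  rw [Jint_interval]
  set R := T + |ξ| with hR
  have hR0 : 0 < R := by positivity
  have hTR : T ≤ R := by rw [hR]; linarith [abs_nonneg ξ]
  have hx0 : 0 < x := hT.trans_le hx.1
  have hxR : x / R ≤ 2 := by rw [div_le_iff₀ hR0]; linarith [hx.2]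
  have hxR0 : 0 < x / R := by positivity
  have hpos' : ∀ t ∈ Icc a b, 0 < t := fun v hv => ha.trans_le hv.1
  have gen : ∀ k Bk y : ℝ, 0 ≤ k → 0 ≤ y → y ≤ Bk → (x / R) * (k * y) ≤ 2 * (k * Bk) := by
    intro k Bk y hk hy hyB
    gcongr
  refine H R hR0 (fun t => x * t ^ c - ξ * t) (fun t => (x / R) * (c * t ^ (c - 1)) - ξ / R)
    (fun t => (x / R) * (c * ((c - 1) * t ^ (c - 2))))
    (fun t => (x / R) * (c * ((c - 1) * ((c - 2) * t ^ (c - 3))))) ?_ ?_ ?_ ?_ ?_ ?_ ?_ ?_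
  · intro t ht
    have h1 := ((Real.hasDerivAt_rpow_const (x := t) (p := c) (Or.inl (hpos' t ht).ne')).const_mul x).sub
      ((hasDerivAt_id t).const_mul ξ)
    refine h1.congr_deriv ?_
    field_simp
  · intro t ht
    have h1 := (((Real.hasDerivAt_rpow_const (x := t) (p := c - 1)
      (Or.inl (hpos' t ht).ne')).const_mul c).const_mul (x / R)).sub_const (ξ / R)
    refine h1.congr_deriv ?_
    rw [show c - 1 - 1 = c - 2 by ring]
  · intro t ht
    have h1 := ((((Real.hasDerivAt_rpow_const (x := t) (p := c - 2)
      (Or.inl (hpos' t ht).ne')).const_mul (c - 1)).const_mul c).const_mul (x / R))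
    refine h1.congr_deriv ?_
    rw [show c - 2 - 1 = c - 3 by ring]
  · have : ContinuousOn (fun t : ℝ => t ^ (c - 3)) (Icc a b) := fun t ht =>
      (rpow_an (c - 3) t (hpos' t ht)).continuousAt.continuousWithinAt
    fun_prop
  · intro t ht
    have e : (x / R) * (c * t ^ (c - 1)) - ξ / R = (x * (c * t ^ (c - 1)) - ξ) / R := by ring
    simp only [e]
    rw [abs_div, abs_of_pos hR0, le_div_iff₀ hR0]
    have la : a ^ (c - 1) ≤ t ^ (c - 1) := Real.rpow_le_rpow ha.le ht.1 hc1.le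
    have lb : t ^ (c - 1) ≤ b ^ (c - 1) := Real.rpow_le_rpow (hpos' t ht).le ht.2 hc1.le
    have h0t := hpos' t ht
    have xa : 2 * C1 * T ≤ x * (c * t ^ (c - 1)) := by
      calc 2 * C1 * T = T * (c * a ^ (c - 1)) := by rw [hC1]; ring
        _ ≤ x * (c * t ^ (c - 1)) := by
          have := hx.1
          gcongr
    have xb : x * (c * t ^ (c - 1)) ≤ C2 * T / 2 := by
      calc x * (c * t ^ (c - 1)) ≤ (2 * T) * (c * b ^ (c - 1)) := by
            have := hx.2
            gcongr
        _ = _ := by rw [hC2]; ring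
    rcases hξ with hξ | hξ
    · refine le_trans ?_ (le_abs_self _)
      rcases le_or_gt 0 ξ with h0 | h0
      · have hRe : R = T + ξ := by rw [hR, abs_of_nonneg h0]
        calc m * R ≤ C1 / (1 + C1) * ((1 + C1) * T) := by
              have : R ≤ (1 + C1) * T := by rw [hRe]; linarith
              gcongr
          _ = C1 * T := by field_simp
          _ ≤ _ := by linarith
      · have hRe : R = T + -ξ := by rw [hR, abs_of_neg h0]
        rw [hRe]
        have h1 : m * T ≤ 2 * C1 * T := by gcongr
        have h2 : m * (-ξ) ≤ 1 * (-ξ) := by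
          have : 0 ≤ -ξ := by linarith
          gcongr
        linarith
    · have hξ0 : 0 < ξ := lt_trans (by positivity) hξ
      have hRe : R = T + ξ := by rw [hR, abs_of_pos hξ0]
      rw [abs_sub_comm]
      refine le_trans ?_ (le_abs_self _)
      have h3 : R ≤ (1 / C2 + 1) * ξ := by
        rw [hRe]
        have : T ≤ 1 / C2 * ξ := by
          rw [one_div, inv_mul_eq_div, le_div_iff₀ hC2p]; linarith
        linarith
      calc m * R ≤ ((1 / C2 + 1)⁻¹ / 2) * ((1 / C2 + 1) * ξ) := by gcongr
        _ = ξ / 2 := by field_simp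
        _ ≤ _ := by linarith
  · intro t ht
    have h0 := hpos' t ht
    have h1 := gen c Ba (t ^ (c - 1)) (by linarith) (by positivity) (hba t ht)
    have h2 : |ξ / R| ≤ 1 := by
      rw [abs_div, abs_of_pos hR0, div_le_one hR0, hR]; linarith
    have h3 : 0 ≤ (x / R) * (c * t ^ (c - 1)) := by positivity
    calc _ ≤ |(x / R) * (c * t ^ (c - 1))| + |ξ / R| := abs_sub _ _
      _ ≤ _ := by rw [abs_of_nonneg h3, hB]; linarith
  · intro t ht
    have h0 := hpos' t ht
    have h1 := gen (c * (c - 1)) Bb (t ^ (c - 2)) (by positivity) (by positivity) (hbb t ht)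
    rw [abs_of_nonneg (by positivity), hB]
    rw [mul_assoc c] at h1
    linarith
  · intro t ht
    have h0 := hpos' t ht
    have h1 := gen (c * (c - 1) * |c - 2|) Bc (t ^ (c - 3)) (by positivity) (by positivity) (hbc t ht)
    have h3 : 0 ≤ t ^ (c - 3) := by positivity
    rw [abs_mul, abs_mul, abs_mul, abs_mul, abs_of_pos hxR0, abs_of_pos hc1, abs_of_pos (by linarith : 0 < c),
      abs_of_nonneg h3, hB]
    have e : x / R * (c * ((c - 1) * (|c - 2| * t ^ (c - 3)))) =
      x / R * (c * (c - 1) * |c - 2| * t ^ (c - 3)) := by ring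
    rw [e]
    linarith

end Sd

section Se
open Real Set Filter Topology MeasureTheory

noncomputable def st (c x ξ : ℝ) : ℝ := (ξ / (c * x)) ^ (1 / (c - 1))

lemma J_stat {a b : ℝ} (w : Wt a b) (c : ℝ) (hc : 1 < c) (ha : 0 < a) (hab : a < b)
    (τ1 τ2 : ℝ) (hτ1 : 0 < τ1) (hτ : τ1 ≤ τ2) (x ξ : ℝ) (hx : 0 < x) (hξ : 0 < ξ)
    (hs : st c x ξ ∈ Icc τ1 τ2) :
    Jint c w.W x ξ = ex (-((1 - 1 / c) * (ξ * st c x ξ))) *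
      Bint c w.W (a / τ2) (b / τ1) (st c x ξ) (ξ * st c x ξ) := by
  set t := st c x ξ with ht
  have hb : 0 < b := ha.trans hab
  have ht0 : 0 < t := hτ1.trans_le hs.1
  have hτ2 : 0 < τ2 := hτ1.trans_le hτ
  have hc0 : 0 < c := by linarith
  have hkey : x * t ^ c = ξ * t / c := by
    have h1 : t ^ (c - 1) = ξ / (c * x) := by
      rw [ht, st, ← Real.rpow_mul (by positivity), one_div, inv_mul_cancel₀ (by linarith), Real.rpow_one]
    have h2 : t ^ c = t ^ (c - 1) * t := by
      rw [← Real.rpow_add_one ht0.ne']; congr 1; ring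
    rw [h2, h1]; field_simp
  have hB : Bint c w.W (a / τ2) (b / τ1) t (ξ * t) =
      ∫ v : ℝ, ((t * w.W (t * v) : ℝ) : ℂ) * ex (ξ * t * phs c v) := by
    unfold Bint
    rw [intervalIntegral.integral_eq_integral_of_support_subset]
    intro v hv
    by_contra h
    apply hv
    have : w.W (t * v) = 0 := by
      apply w.z0
      intro h'
      apply h
      have hv0 : 0 < v := by
        by_contra hn
        have := mul_nonpos_of_nonneg_of_nonpos ht0.le (not_lt.mp hn)
        linarith [h'.1]
      constructor
      · rw [div_lt_iff₀ hτ2]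
        calc a < t * v := h'.1
          _ ≤ v * τ2 := by rw [mul_comm]; have := hs.2; gcongr
      · rw [le_div_iff₀ hτ1]
        calc v * τ1 ≤ t * v := by rw [mul_comm t]; have := hs.1; gcongr
          _ ≤ b := h'.2.le
    simp [this]
  rw [hB, ← integral_const_mul]
  unfold Jint
  have h := Measure.integral_comp_mul_left (fun s : ℝ => (w.W s : ℂ) * ex (x * s ^ c - ξ * s)) t
  have h2 : ∫ s : ℝ, (w.W s : ℂ) * ex (x * s ^ c - ξ * s) =
      (t : ℂ) * ∫ v : ℝ, (w.W (t * v) : ℂ) * ex (x * (t * v) ^ c - ξ * (t * v)) := by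
    rw [h, abs_of_pos (by positivity)]
    rw [Complex.real_smul, ← mul_assoc]
    push_cast
    rw [mul_inv_cancel₀ (by exact_mod_cast ht0.ne'), one_mul]
  rw [h2, ← integral_const_mul]
  congr 1
  ext v
  by_cases hv : t * v ∈ Ioo a b
  · have hv0 : 0 < v := by
      by_contra hn
      have := mul_nonpos_of_nonneg_of_nonpos ht0.le (not_lt.mp hn)
      linarith [hv.1]
    have e : x * (t * v) ^ c - ξ * (t * v) = -((1 - 1 / c) * (ξ * t)) + ξ * t * phs c v := by
      rw [Real.mul_rpow ht0.le hv0.le, ← mul_assoc, hkey, phs]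
      field_simp
      ring
    rw [e, ex_add]
    push_cast
    ring
  · rw [w.z0 _ hv]; simp

lemma rpow_lip (s p q : ℝ) (hp : 0 < p) : ∃ K > 0, ∀ r ∈ Icc p q, ∀ r' ∈ Icc p q,
    |r ^ s - r' ^ s| ≤ K * |r - r'| := by
  obtain ⟨B, hB, h⟩ := rpow_bd (s - 1) p q hp
  refine ⟨|s| * B + 1, by positivity, ?_⟩
  intro r hr r' hr'
  have := (convex_Icc p q).norm_image_sub_le_of_norm_hasDerivWithin_le (f := fun v : ℝ => v ^ s)
    (f' := fun v => s * v ^ (s - 1)) (C := |s| * B + 1)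
    (fun v hv => (Real.hasDerivAt_rpow_const (Or.inl (hp.trans_le hv.1).ne')).hasDerivWithinAt)
    (fun v hv => by
      have hv0 := hp.trans_le hv.1
      rw [norm_mul, Real.norm_eq_abs, Real.norm_eq_abs, abs_of_nonneg (by positivity : 0 ≤ v ^ (s-1))]
      have := h v hv
      have : |s| * v ^ (s-1) ≤ |s| * B := by gcongr
      linarith) hr' hr
  simpa [Real.norm_eq_abs] using this

lemma amp {a b : ℝ} (w : Wt a b) (c : ℝ) (hc : 1 < c) (ha : 0 < a) (hab : a < b)
    (C1 C2 : ℝ) (hC1 : 0 < C1) (hC12 : C1 ≤ C2) :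
    ∃ A : ℝ → ℝ → ℂ, ∃ C > 0, ∀ T > 0, ∀ x ∈ Icc T (2 * T), ∀ ξ ∈ Icc (C1 * T) (C2 * T),
      Jint c w.W x ξ = ex (-((1 - 1 / c) * (ξ * st c x ξ))) * A x ξ ∧
      ‖A x ξ‖ ≤ C * T ^ (-(1 / 2) : ℝ) ∧
      ∀ ξ' ∈ Icc (C1 * T) (C2 * T), ‖A x ξ - A x ξ'‖ ≤ C * (|ξ - ξ'| / T) * T ^ (-(1 / 2) : ℝ) := by
  have hc0 : 0 < c := by linarith
  have hc1 : 0 < c - 1 := by linarith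
  have hC2 : 0 < C2 := by linarith
  set s := 1 / (c - 1) with hs
  have hs0 : 0 < s := by positivity
  set p := C1 / (2 * c) with hp
  set q := C2 / c with hq
  have hp0 : 0 < p := by positivity
  have hpq : p ≤ q := by
    rw [hp, hq]
    gcongr
    linarith
  set τ1 := p ^ s with hτ1
  set τ2 := q ^ s with hτ2
  have hτ10 : 0 < τ1 := by positivity
  have hτ : τ1 ≤ τ2 := Real.rpow_le_rpow hp0.le hpq hs0.le
  have hτ20 : 0 < τ2 := by linarith
  obtain ⟨K, hK, hlip⟩ := rpow_lip s p q hp0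
  obtain ⟨B1, hB1, H1⟩ := B_bound w c hc ha hab τ1 τ2 hτ10 hτ
  obtain ⟨B2, hB2, H2⟩ := B_lip_t w c hc ha hab τ1 τ2 hτ10 hτ
  obtain ⟨B3, hB3, H3⟩ := B_lip_X w c hc ha hab τ1 τ2 hτ10 hτ
  set y := C1 * τ1 with hy
  have hy0 : 0 < y := by positivity
  set D1 := B1 * y ^ (-(1 / 2) : ℝ) with hD1
  set D2 := B2 * (K / c) * y ^ (-(1 / 2) : ℝ) with hD2
  set D3 := B3 * (τ2 + C2 * (K / c)) * y ^ (-(3 / 2) : ℝ) with hD3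
  have hD1p : 0 < D1 := by positivity
  have hD2p : 0 < D2 := by positivity
  have hD3p : 0 < D3 := by positivity
  refine ⟨fun x ξ => Bint c w.W (a / τ2) (b / τ1) (st c x ξ) (ξ * st c x ξ), D1 + D2 + D3,
    by positivity, ?_⟩
  intro T hT x hx ξ hξ
  have hx0 : 0 < x := hT.trans_le hx.1
  have hr : ∀ ξ ∈ Icc (C1 * T) (C2 * T), ξ / (c * x) ∈ Icc p q := by
    intro ξ hξ
    constructor
    · rw [hp, div_le_div_iff₀ (by positivity) (by positivity)]
      have h1 : C1 * (c * x) ≤ C1 * (c * (2 * T)) := by have := hx.2; gcongr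
      have h2 : C1 * T * (2 * c) ≤ ξ * (2 * c) := by have := hξ.1; gcongr
      linarith
    · rw [hq, div_le_div_iff₀ (by positivity) (by positivity)]
      have h1 : ξ * c ≤ C2 * T * c := by have := hξ.2; gcongr
      have h2 : C2 * (c * T) ≤ C2 * (c * x) := by have := hx.1; gcongr
      linarith
  have hst : ∀ ξ ∈ Icc (C1 * T) (C2 * T), st c x ξ ∈ Icc τ1 τ2 := by
    intro ξ hξ
    obtain ⟨h1, h2⟩ := hr ξ hξ
    exact ⟨Real.rpow_le_rpow hp0.le h1 hs0.le, Real.rpow_le_rpow (hp0.le.trans h1) h2 hs0.le⟩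
  have hξ0 : ∀ ξ ∈ Icc (C1 * T) (C2 * T), 0 < ξ := fun ξ hξ => lt_of_lt_of_le (by positivity) hξ.1
  have hX : ∀ ξ ∈ Icc (C1 * T) (C2 * T), y * T ≤ ξ * st c x ξ := by
    intro ξ hξ
    have h1 := (hst ξ hξ).1
    have h2 := hξ.1
    have h3 := hξ0 ξ hξ
    calc y * T = (C1 * T) * τ1 := by rw [hy]; ring
      _ ≤ _ := by gcongr
  have hpw : ∀ ξ ∈ Icc (C1 * T) (C2 * T), (ξ * st c x ξ) ^ (-(1 / 2) : ℝ) ≤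
      y ^ (-(1 / 2) : ℝ) * T ^ (-(1 / 2) : ℝ) := by
    intro ξ hξ
    rw [← Real.mul_rpow hy0.le hT.le]
    exact Real.rpow_le_rpow_of_nonpos (by positivity) (hX ξ hξ) (by norm_num)
  have hTp : 0 < T ^ (-(1 / 2) : ℝ) := by positivity
  refine ⟨J_stat w c hc ha hab τ1 τ2 hτ10 hτ x ξ hx0 (hξ0 ξ hξ) (hst ξ hξ), ?_, ?_⟩
  · have hpos : 0 < ξ * st c x ξ := lt_of_lt_of_le (by positivity) (hX ξ hξ)
    calc _ ≤ B1 * (ξ * st c x ξ) ^ (-(1 / 2) : ℝ) := H1 _ hpos _ (hst ξ hξ)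
      _ ≤ B1 * (y ^ (-(1 / 2) : ℝ) * T ^ (-(1 / 2) : ℝ)) := by gcongr; exact hpw ξ hξ
      _ = D1 * T ^ (-(1 / 2) : ℝ) := by rw [hD1]; ring
      _ ≤ _ := by gcongr; linarith
  · intro ξ' hξ'
    have hpos : 0 < ξ * st c x ξ := lt_of_lt_of_le (by positivity) (hX ξ hξ)
    have d1 : |st c x ξ - st c x ξ'| ≤ K / c * (|ξ - ξ'| / T) := by
      calc _ ≤ K * |ξ / (c * x) - ξ' / (c * x)| := hlip _ (hr ξ hξ) _ (hr ξ' hξ')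
        _ = K / c * (|ξ - ξ'| / x) := by
          rw [← sub_div, abs_div, abs_of_pos (by positivity : 0 < c * x)]; field_simp
        _ ≤ _ := by have := hx.1; gcongr
    have d2 : |ξ * st c x ξ - ξ' * st c x ξ'| ≤ (τ2 + C2 * (K / c)) * |ξ - ξ'| := by
      have e : ξ * st c x ξ - ξ' * st c x ξ' = (ξ - ξ') * st c x ξ + ξ' * (st c x ξ - st c x ξ') := by ring
      have hs1 := hst ξ hξ
      have hs2 : 0 < st c x ξ := hτ10.trans_le hs1.1
      have h3 := hξ0 ξ' hξ'
      calc _ ≤ |(ξ - ξ') * st c x ξ| + |ξ' * (st c x ξ - st c x ξ')| := by rw [e]; exact abs_add_le _ _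
        _ = |ξ - ξ'| * st c x ξ + ξ' * |st c x ξ - st c x ξ'| := by
          rw [abs_mul, abs_mul, abs_of_pos hs2, abs_of_pos h3]
        _ ≤ |ξ - ξ'| * τ2 + (C2 * T) * (K / c * (|ξ - ξ'| / T)) := by
          have := hs1.2
          have := hξ'.2
          gcongr
        _ = _ := by field_simp
    have e1 : ‖Bint c w.W (a / τ2) (b / τ1) (st c x ξ) (ξ * st c x ξ) -
        Bint c w.W (a / τ2) (b / τ1) (st c x ξ') (ξ * st c x ξ)‖ ≤
        D2 * (|ξ - ξ'| / T) * T ^ (-(1 / 2) : ℝ) := by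
      calc _ ≤ B2 * |st c x ξ - st c x ξ'| * (ξ * st c x ξ) ^ (-(1 / 2) : ℝ) :=
            H2 _ hpos _ (hst ξ hξ) _ (hst ξ' hξ')
        _ ≤ B2 * (K / c * (|ξ - ξ'| / T)) * (y ^ (-(1 / 2) : ℝ) * T ^ (-(1 / 2) : ℝ)) := by
          gcongr; exact hpw ξ hξ
        _ = _ := by rw [hD2]; ring
    have e2 : ‖Bint c w.W (a / τ2) (b / τ1) (st c x ξ') (ξ * st c x ξ) -
        Bint c w.W (a / τ2) (b / τ1) (st c x ξ') (ξ' * st c x ξ')‖ ≤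
        D3 * (|ξ - ξ'| / T) * T ^ (-(1 / 2) : ℝ) := by
      calc _ ≤ B3 * |ξ * st c x ξ - ξ' * st c x ξ'| * (y * T) ^ (-(3 / 2) : ℝ) :=
            H3 (y * T) (by positivity) _ (hX ξ hξ) _ (hX ξ' hξ') _ (hst ξ' hξ')
        _ ≤ B3 * ((τ2 + C2 * (K / c)) * |ξ - ξ'|) * (y ^ (-(3 / 2) : ℝ) * T ^ (-(3 / 2) : ℝ)) := by
          rw [Real.mul_rpow hy0.le hT.le]; gcongr
        _ = _ := by
          have : T ^ (-(3 / 2) : ℝ) = T ^ (-(1 / 2) : ℝ) / T := by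
            rw [← Real.rpow_sub_one hT.ne']; norm_num
          rw [hD3, this]; ring
    calc _ ≤ _ := norm_sub_le_norm_sub_add_norm_sub _ (Bint c w.W (a / τ2) (b / τ1) (st c x ξ') (ξ * st c x ξ)) _
      _ ≤ D2 * (|ξ - ξ'| / T) * T ^ (-(1 / 2) : ℝ) + D3 * (|ξ - ξ'| / T) * T ^ (-(1 / 2) : ℝ) := add_le_add e1 e2
      _ = (D2 + D3) * (|ξ - ξ'| / T) * T ^ (-(1 / 2) : ℝ) := by ring
      _ ≤ _ := by gcongr; linarith

end Se

section Sf
open Real Set Filter Topology MeasureTheory FourierTransform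

noncomputable def Ssum (c : ℝ) (W : ℝ → ℝ) (b M x : ℝ) : ℂ :=
  ∑ n ∈ Finset.range (⌊b * M⌋₊ + 1), (W (n / M) : ℂ) * ex (x * (n / M : ℝ) ^ c)

lemma fourier_f {a b : ℝ} (w : Wt a b) (c M x : ℝ) (hM : 0 < M) (l : ℤ) :
    𝓕 (fun u : ℝ => (w.W (u / M) : ℂ) * ex (x * (u / M) ^ c)) (l : ℝ) =
      (M : ℂ) * Jint c w.W x (l * M) := by
  rw [Real.fourier_real_eq_integral_exp_smul]
  have h := Measure.integral_comp_div (fun s : ℝ => (w.W s : ℂ) * ex (x * s ^ c - (l * M) * s)) M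
  rw [abs_of_pos hM, Complex.real_smul] at h
  unfold Jint
  rw [← h]
  congr 1
  ext u
  have e : x * (u / M) ^ c - (l * M) * (u / M) = -(u * l) + x * (u / M) ^ c := by
    field_simp; ring
  rw [e, ex_add, smul_eq_mul]
  have : ex (-(u * l)) = Complex.exp (↑(-2 * π * u * ↑l) * Complex.I) := by
    unfold ex; congr 2; push_cast; ring
  rw [← this]; ring

lemma poisson_S {a b : ℝ} (w : Wt a b) (c : ℝ) (hc : 1 < c) (ha : 0 < a) (hab : a < b) (M x : ℝ)
    (hM : 0 < M) (hs : Summable fun l : ℤ => Jint c w.W x (l * M)) :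
    Ssum c w.W b M x = M * ∑' l : ℤ, Jint c w.W x (l * M) := by
  set f := (fun u : ℝ => (w.W (u / M) : ℂ) * ex (x * (u / M) ^ c)) with hf
  have hcont : Continuous f := by
    have h0 := w.c0
    have : Continuous fun u : ℝ => (u / M) ^ c :=
      Continuous.rpow_const (by fun_prop) (fun _ => Or.inr (by linarith))
    have h3 := ex_continuous
    have h4 : Continuous fun u : ℝ => ex (x * (u / M) ^ c) := h3.comp (by fun_prop)
    have h5 : Continuous fun u : ℝ => (w.W (u / M) : ℂ) := Complex.continuous_ofReal.comp (h0.comp (by fun_prop))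
    exact h5.mul h4
  have hz : ∀ u, u ∉ Icc (a * M) (b * M) → f u = 0 := by
    intro u hu
    have : w.W (u / M) = 0 := by
      apply w.z0
      intro h
      apply hu
      constructor
      · have := h.1; rw [lt_div_iff₀ hM] at this; exact this.le
      · have := h.2; rw [div_lt_iff₀ hM] at this; exact this.le
    simp [hf, this]
  have hO : f =O[cocompact ℝ] (fun u : ℝ => |u| ^ (-2 : ℝ)) := by
    have : ∀ᶠ u in cocompact ℝ, f u = 0 := by
      have := (isCompact_Icc (a := a * M) (b := b * M)).compl_mem_cocompact
      filter_upwards [this] with u hu using hz u hu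
    exact (Asymptotics.isBigO_zero _ _).congr' (by filter_upwards [this] with u hu; exact hu.symm) (by rfl)
  have hF : ∀ l : ℤ, 𝓕 f (l : ℝ) = (M : ℂ) * Jint c w.W x (l * M) := fourier_f w c M x hM
  have hP := Real.tsum_eq_tsum_fourier_of_rpow_decay_of_summable hcont (by norm_num : (1:ℝ) < 2) hO
    (by simp_rw [hF]; exact hs.mul_left _) 0
  simp only [zero_add, hF] at hP
  rw [← tsum_mul_left]
  have e2 : ∑' l : ℤ, (M : ℂ) * Jint c w.W x (l * M) =
      ∑' n : ℤ, (M : ℂ) * Jint c w.W x (n * M) * (fourier n) ((0 : ℝ) : UnitAddCircle) := by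
    congr 1; ext n; simp
  rw [e2, ← hP]
  rw [tsum_eq_sum (s := (Finset.range (⌊b * M⌋₊ + 1)).map Nat.castEmbedding)]
  · rw [Finset.sum_map]; simp [Ssum, hf]
  · intro n hn
    apply hz
    intro h
    apply hn
    have hn0 : 0 ≤ n := by
      have : (0:ℝ) < n := lt_of_lt_of_le (by positivity) h.1
      exact_mod_cast this.le
    obtain ⟨k, rfl⟩ := Int.eq_ofNat_of_zero_le hn0
    simp only [Finset.mem_map, Finset.mem_range]
    refine ⟨k, ?_, rfl⟩
    have := h.2
    push_cast at this
    exact Nat.lt_succ_of_le (Nat.le_floor this)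

lemma poisson_main {a b : ℝ} (w : Wt a b) (c : ℝ) (hc : 1 < c) (ha : 0 < a) (hab : a < b) :
    ∃ C > 0, ∀ T ≥ 1, ∀ M ≥ 1, ∀ x ∈ Icc T (2 * T),
      ‖Ssum c w.W b M x - M * ∑ l ∈ Finset.Icc ⌈c * a ^ (c - 1) / 2 * (T / M)⌉₊ ⌊4 * c * b ^ (c - 1) * (T / M)⌋₊,
        Jint c w.W x (l * M)‖ ≤ C * M * T ^ (-(1 / 2) : ℝ) := by
  have hb : 0 < b := ha.trans hab
  obtain ⟨C, hC, H⟩ := J_nonstat w c hc ha hab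
  set C1 := c * a ^ (c - 1) / 2 with hC1
  set C2 := 4 * c * b ^ (c - 1) with hC2
  have hC1p : 0 < C1 := by positivity
  set h0 : ℤ → ℝ := fun l => |(l : ℝ)| ^ (-(3 / 2) : ℝ) + if l = 0 then 1 else 0 with hh0
  have hsum : Summable h0 := by
    refine (Real.summable_abs_int_rpow (by norm_num)).add ?_
    exact summable_of_ne_finset_zero (s := {0}) (fun l hl => by simp at hl; simp [hl])
  have h0nn : ∀ l, 0 ≤ h0 l := fun l => by simp only [hh0]; positivity
  refine ⟨C * (∑' l, h0 l + 1), by have : 0 ≤ ∑' l, h0 l := (tsum_nonneg h0nn);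
                                    positivity, ?_⟩
  intro T hT M hM x hx
  have hT0 : 0 < T := by linarith
  have hM0 : 0 < M := by linarith
  set g : ℤ → ℂ := fun l => Jint c w.W x (l * M) with hg
  set F : Finset ℤ := (Finset.Icc ⌈C1 * (T / M)⌉₊ ⌊C2 * (T / M)⌋₊).map Nat.castEmbedding with hF
  set g' : ℤ → ℂ := fun l => if l ∈ F then 0 else g l with hg'
  have hbd : ∀ l, ‖g' l‖ ≤ C * T ^ (-(1 / 2) : ℝ) * h0 l := by
    intro l
    by_cases hl : l ∈ F
    · simp only [hg', hl, if_true, norm_zero]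
      have := h0nn l
      positivity
    · simp only [hg', hl, if_false]
      have hout : (l * M < C1 * T ∨ C2 * T < l * M) := by
        by_contra hn
        push Not at hn
        apply hl
        have hlp : (0:ℝ) < l := by
          have : 0 < l * M := lt_of_lt_of_le (by positivity) hn.1
          exact pos_of_mul_pos_left this hM0.le
        have hn0 : 0 ≤ l := by exact_mod_cast hlp.le
        obtain ⟨k, rfl⟩ := Int.eq_ofNat_of_zero_le hn0
        simp only [hF, Finset.mem_map, Finset.mem_Icc]
        push_cast at hn
        refine ⟨k, ⟨Nat.ceil_le.mpr ?_, Nat.le_floor ?_⟩, rfl⟩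
        · rw [← mul_div_assoc, div_le_iff₀ hM0]; exact hn.1
        · rw [← mul_div_assoc, le_div_iff₀ hM0]; exact hn.2
      calc ‖g l‖ ≤ C * ((T + |l * M|) ^ 2)⁻¹ := H T hT0 x hx (l * M) hout
        _ ≤ C * (T ^ (-(1 / 2) : ℝ) * h0 l) := by
          gcongr
          have hp : 0 < T + |l * M| := by positivity
          have e : ((T + |l * M|) ^ 2)⁻¹ = (T + |l * M|) ^ (-(1 / 2) : ℝ) * (T + |l * M|) ^ (-(3 / 2) : ℝ) := by
            rw [← Real.rpow_add hp, ← Real.rpow_natCast, ← Real.rpow_neg hp.le]; norm_num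
          rw [e]
          have i1 : (T + |l * M|) ^ (-(1 / 2) : ℝ) ≤ T ^ (-(1 / 2) : ℝ) :=
            Real.rpow_le_rpow_of_nonpos hT0 (by linarith [abs_nonneg (l * M)]) (by norm_num)
          have i2 : (T + |l * M|) ^ (-(3 / 2) : ℝ) ≤ h0 l := by
            by_cases h : l = 0
            · subst h
              simp only [hh0, if_true]
              have : (T + |((0 : ℤ) : ℝ) * M|) ^ (-(3 / 2) : ℝ) ≤ 1 :=
                Real.rpow_le_one_of_one_le_of_nonpos (by simpa using hT) (by norm_num)
              have : 0 ≤ |((0 : ℤ) : ℝ)| ^ (-(3 / 2) : ℝ) := by positivity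
              linarith
            · simp only [hh0, h, if_false, add_zero]
              have hl1 : 0 < |(l : ℝ)| := abs_pos.mpr (by exact_mod_cast h)
              refine Real.rpow_le_rpow_of_nonpos hl1 ?_ (by norm_num)
              rw [abs_mul, abs_of_pos hM0]
              have : |(l : ℝ)| * 1 ≤ |(l : ℝ)| * M := by gcongr
              linarith
          gcongr
        _ = _ := by ring
  have hs' : Summable g' := Summable.of_norm_bounded (hsum.mul_left _) hbd
  have hgF : HasSum (fun l => if l ∈ F then g l else 0) (∑ l ∈ F, g l) := by
    have : HasSum (fun l => if l ∈ F then g l else 0) (∑ l ∈ F, if l ∈ F then g l else 0) :=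
      hasSum_sum_of_ne_finset_zero (fun l hl => by simp [hl])
    convert this using 1
    exact Finset.sum_congr rfl (fun l hl => by simp [hl])
  have hgs : HasSum g (∑' l, g' l + ∑ l ∈ F, g l) := by
    have := hs'.hasSum.add hgF
    convert this using 1
    ext l
    by_cases hl : l ∈ F <;> simp [hg', hl]
  rw [poisson_S w c hc ha hab M x hM0 hgs.summable]
  have e1 : ∑ l ∈ F, g l = ∑ l ∈ Finset.Icc ⌈C1 * (T / M)⌉₊ ⌊C2 * (T / M)⌋₊, Jint c w.W x (l * M) := by
    rw [hF, Finset.sum_map]; simp [hg]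
  rw [hgs.tsum_eq, e1, ← mul_sub, add_sub_cancel_right, norm_mul, Complex.norm_real, Real.norm_of_nonneg hM0.le]
  have : ‖∑' l, g' l‖ ≤ C * T ^ (-(1 / 2) : ℝ) * ∑' l, h0 l :=
    (tsum_of_norm_bounded ((hsum.hasSum).mul_left _) hbd)
  calc _ ≤ M * (C * T ^ (-(1 / 2) : ℝ) * ∑' l, h0 l) := by gcongr
    _ = C * (∑' l, h0 l) * M * T ^ (-(1 / 2) : ℝ) := by ring
    _ ≤ _ := by gcongr; linarith

end Sf

section Sg
open Real Set Filter Topology MeasureTheory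

lemma abel_id (A e : ℕ → ℂ) (p q : ℕ) (hpq : p ≤ q) :
    ∑ l ∈ Finset.Icc p q, A l * e l = A q * ∑ l ∈ Finset.Icc p q, e l -
      ∑ k ∈ Finset.Ico p q, (A (k + 1) - A k) * ∑ l ∈ Finset.Icc p k, e l := by
  induction q, hpq using Nat.le_induction with
  | base => simp
  | succ n hn ih =>
    rw [Finset.sum_Icc_succ_top (by omega), Finset.sum_Icc_succ_top (by omega), ih,
      Finset.sum_Ico_succ_top hn]
    ring

lemma abel_four (A e : ℕ → ℂ) (p q : ℕ) (α δ : ℝ) (hα : 0 ≤ α) (hδ : 0 ≤ δ)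
    (hA : ∀ l ∈ Finset.Icc p q, ‖A l‖ ≤ α)
    (hd : ∀ k ∈ Finset.Ico p q, ‖A (k + 1) - A k‖ ≤ δ) :
    ‖∑ l ∈ Finset.Icc p q, A l * e l‖ ^ 4 ≤ 8 * (α ^ 4 * ‖∑ l ∈ Finset.Icc p q, e l‖ ^ 4 +
      δ ^ 4 * (q : ℝ) ^ 3 * ∑ k ∈ Finset.Ico p q, ‖∑ l ∈ Finset.Icc p k, e l‖ ^ 4) := by
  rcases lt_or_ge q p with h | hpq
  · simp [Finset.Icc_eq_empty_of_lt h, Finset.Ico_eq_empty_of_le h.le]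
  rw [abel_id A e p q hpq]
  set P := fun k => ∑ l ∈ Finset.Icc p k, e l with hP
  have h1 : ‖A q * P q - ∑ k ∈ Finset.Ico p q, (A (k + 1) - A k) * P k‖ ≤
      α * ‖P q‖ + δ * ∑ k ∈ Finset.Ico p q, ‖P k‖ := by
    refine (norm_sub_le _ _).trans (add_le_add ?_ ?_)
    · rw [norm_mul]
      have := hA q (by simp [hpq])
      gcongr
    · refine (norm_sum_le _ _).trans ?_
      rw [Finset.mul_sum]
      refine Finset.sum_le_sum fun k hk => ?_
      rw [norm_mul]
      have := hd k hk
      gcongr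
  have h2 : (∑ k ∈ Finset.Ico p q, ‖P k‖) ^ 4 ≤ (q : ℝ) ^ 3 * ∑ k ∈ Finset.Ico p q, ‖P k‖ ^ 4 := by
    have h3 := pow_sum_le_card_mul_sum_pow (s := Finset.Ico p q) (f := fun k => ‖P k‖)
      (fun k _ => norm_nonneg _) 3
    refine h3.trans ?_
    have : ((Finset.Ico p q).card : ℝ) ≤ q := by
      rw [Nat.card_Ico]; exact_mod_cast Nat.sub_le _ _
    gcongr
  have h4 : ∀ x y : ℝ, (x + y) ^ 4 ≤ 8 * (x ^ 4 + y ^ 4) := by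
    intro x y
    nlinarith [sq_nonneg (x - y), sq_nonneg (x + y), sq_nonneg (x ^ 2 - y ^ 2), sq_nonneg (x * y),
      mul_nonneg (sq_nonneg (x - y)) (sq_nonneg (x + y)), mul_nonneg (sq_nonneg (x - y)) (sq_nonneg (x - y)),
      mul_nonneg (sq_nonneg (x - y)) (sq_nonneg x), mul_nonneg (sq_nonneg (x - y)) (sq_nonneg y)]
  calc _ ≤ (α * ‖P q‖ + δ * ∑ k ∈ Finset.Ico p q, ‖P k‖) ^ 4 := by gcongr
    _ ≤ 8 * ((α * ‖P q‖) ^ 4 + (δ * ∑ k ∈ Finset.Ico p q, ‖P k‖) ^ 4) := h4 _ _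
    _ ≤ 8 * (α ^ 4 * ‖P q‖ ^ 4 + δ ^ 4 * ((q : ℝ) ^ 3 * ∑ k ∈ Finset.Ico p q, ‖P k‖ ^ 4)) := by
      rw [mul_pow, mul_pow]; gcongr
    _ = _ := by ring

noncomputable def Dl (ω : ℕ → ℝ) (q : ℕ × ℕ × ℕ × ℕ) : ℝ := ω q.1 + ω q.2.1 - ω q.2.2.1 - ω q.2.2.2

lemma norm_four (J : Finset ℕ) (a ω : ℕ → ℝ) (y : ℝ) :
    ((‖∑ j ∈ J, (a j : ℂ) * ex (y * ω j)‖ ^ 4 : ℝ) : ℂ) =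
      ∑ q ∈ J ×ˢ J ×ˢ J ×ˢ J, ((a q.1 * a q.2.1 * a q.2.2.1 * a q.2.2.2 : ℝ) : ℂ) * ex (y * Dl ω q) := by
  set z := ∑ j ∈ J, (a j : ℂ) * ex (y * ω j) with hz
  have hzc : (starRingEnd ℂ) z = ∑ j ∈ J, (a j : ℂ) * ex (-(y * ω j)) := by
    rw [hz, map_sum]
    refine Finset.sum_congr rfl fun j _ => ?_
    rw [map_mul, Complex.conj_ofReal, ex_neg]
  have h1 : ((‖z‖ ^ 4 : ℝ) : ℂ) = z * (z * ((starRingEnd ℂ) z * (starRingEnd ℂ) z)) := by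
    have := Complex.mul_conj' z
    push_cast
    calc (‖z‖ : ℂ) ^ 4 = ((‖z‖ : ℂ) ^ 2) * ((‖z‖ : ℂ) ^ 2) := by ring
      _ = _ := by rw [← this]; ring
  rw [h1, hzc]
  conv_lhs => rw [hz]
  rw [Finset.sum_product, Finset.sum_mul]
  refine Finset.sum_congr rfl fun j1 _ => ?_
  rw [Finset.sum_product, Finset.sum_mul, Finset.mul_sum]
  refine Finset.sum_congr rfl fun j2 _ => ?_
  rw [Finset.sum_product, Finset.sum_mul, Finset.mul_sum, Finset.mul_sum]
  refine Finset.sum_congr rfl fun j3 _ => ?_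
  rw [Finset.mul_sum, Finset.mul_sum, Finset.mul_sum]
  refine Finset.sum_congr rfl fun j4 _ => ?_
  have : y * Dl ω (j1, j2, j3, j4) = y * ω j1 + (y * ω j2 + (-(y * ω j3) + -(y * ω j4))) := by
    simp only [Dl]; ring
  rw [this, ex_add, ex_add, ex_add]
  push_cast
  ring

lemma gauss_ft (u : ℝ) : Integrable (fun v : ℝ => ex (v * u) * ((rexp (-π * v ^ 2) : ℝ) : ℂ)) ∧
    ∫ v : ℝ, ex (v * u) * ((rexp (-π * v ^ 2) : ℝ) : ℂ) = ((rexp (-π * u ^ 2) : ℝ) : ℂ) := by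
  have hint : Integrable (fun v : ℝ => rexp (-π * v ^ 2)) := integrable_exp_neg_mul_sq Real.pi_pos
  constructor
  · refine Integrable.bdd_mul (c := 1) hint.ofReal ?_ ?_
    · exact (ex_continuous.comp (by fun_prop)).aestronglyMeasurable
    · exact Filter.Eventually.of_forall fun v => by rw [ex_norm]
  · have h := fourierIntegral_gaussian (b := (π : ℂ)) (by simpa using Real.pi_pos) ((2 * π * u : ℝ) : ℂ)
    have hpi : (π : ℂ) ≠ 0 := by exact_mod_cast Real.pi_ne_zero
    rw [div_self hpi, Complex.one_cpow, one_mul] at h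
    have e : -((2 * π * u : ℝ) : ℂ) ^ 2 / (4 * (π : ℂ)) = ((-π * u ^ 2 : ℝ) : ℂ) := by
      push_cast; field_simp; ring
    rw [e] at h
    rw [Complex.ofReal_exp, ← h]
    congr 1
    ext v
    unfold ex
    rw [Complex.ofReal_exp]
    congr 2
    · push_cast; ring
    · push_cast; ring

lemma gauss_four (J : Finset ℕ) (a ω : ℕ → ℝ) (μ : ℝ) :
    Integrable (fun v : ℝ => ‖∑ j ∈ J, (a j : ℂ) * ex (v * μ * ω j)‖ ^ 4 * rexp (-π * v ^ 2)) ∧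
    ∫ v : ℝ, ‖∑ j ∈ J, (a j : ℂ) * ex (v * μ * ω j)‖ ^ 4 * rexp (-π * v ^ 2) =
      ∑ q ∈ J ×ˢ J ×ˢ J ×ˢ J, (a q.1 * a q.2.1 * a q.2.2.1 * a q.2.2.2) * rexp (-π * (μ * Dl ω q) ^ 2) := by
  have key : (fun v : ℝ => ((‖∑ j ∈ J, (a j : ℂ) * ex (v * μ * ω j)‖ ^ 4 * rexp (-π * v ^ 2) : ℝ) : ℂ)) =
      fun v => ∑ q ∈ J ×ˢ J ×ˢ J ×ˢ J, ((a q.1 * a q.2.1 * a q.2.2.1 * a q.2.2.2 : ℝ) : ℂ) *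
        (ex (v * (μ * Dl ω q)) * ((rexp (-π * v ^ 2) : ℝ) : ℂ)) := by
    ext v
    rw [Complex.ofReal_mul, norm_four, Finset.sum_mul]
    refine Finset.sum_congr rfl fun q _ => ?_
    rw [mul_assoc v, mul_assoc]
  have hI : Integrable (fun v : ℝ => ((‖∑ j ∈ J, (a j : ℂ) * ex (v * μ * ω j)‖ ^ 4 * rexp (-π * v ^ 2) : ℝ) : ℂ)) := by
    rw [key]
    exact integrable_finsetSum _ fun q _ => (gauss_ft _).1.const_mul _
  constructor
  · have := hI.re
    simpa only [RCLike.re_to_complex, Complex.ofReal_re] using this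
  · apply Complex.ofReal_injective
    rw [← integral_complex_ofReal, key, integral_finsetSum _ fun q _ => (gauss_ft _).1.const_mul _, Complex.ofReal_sum]
    refine Finset.sum_congr rfl fun q _ => ?_
    rw [integral_const_mul, (gauss_ft _).2, ← Complex.ofReal_mul]

lemma gauss_layer (K : ℕ) (u : ℝ) (hu : |u| ≤ 2 ^ K) :
    rexp (-π * u ^ 2) ≤ 16 * ∑ k ∈ Finset.range (K + 1), (1 / 16 : ℝ) ^ k * (if |u| ≤ 2 ^ k then 1 else 0) := by
  classical
  have hex : ∃ k, |u| ≤ 2 ^ k := ⟨K, hu⟩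
  set k := Nat.find hex with hk
  have hk1 : |u| ≤ 2 ^ k := Nat.find_spec hex
  have hkK : k ≤ K := Nat.find_min' hex hu
  have hsingle : (1 / 16 : ℝ) ^ k ≤ ∑ k ∈ Finset.range (K + 1), (1 / 16 : ℝ) ^ k * (if |u| ≤ 2 ^ k then 1 else 0) := by
    have := Finset.single_le_sum (f := fun k => (1 / 16 : ℝ) ^ k * (if |u| ≤ 2 ^ k then (1:ℝ) else 0))
      (s := Finset.range (K + 1)) (fun i _ => by positivity) (Finset.mem_range.mpr (Nat.lt_succ_of_le hkK))
    simpa [hk1] using this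
  refine le_trans ?_ (mul_le_mul_of_nonneg_left hsingle (by norm_num))
  rcases Nat.eq_zero_or_pos k with h0 | h0
  · rw [h0]
    have : rexp (-π * u ^ 2) ≤ 1 := Real.exp_le_one_iff.mpr (by have := Real.pi_pos; nlinarith [sq_nonneg u])
    rw [pow_zero]; linarith
  · have hlt : (2:ℝ) ^ (k - 1) < |u| := by
      have := Nat.find_min hex (m := k - 1) (by omega)
      exact not_le.mp this
    obtain ⟨m, hm⟩ : ∃ m, k = m + 1 := ⟨k - 1, by omega⟩
    rw [hm] at hlt ⊢
    simp only [Nat.add_sub_cancel] at hlt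
    have hu4 : (16:ℝ) ^ m ≤ u ^ 4 := by
      have : ((2:ℝ) ^ m) ^ 4 ≤ |u| ^ 4 := by gcongr
      rw [← pow_mul, mul_comm, pow_mul] at this
      have e : |u| ^ 4 = u ^ 4 := by rw [show (4:ℕ) = 2 * 2 by norm_num, pow_mul, sq_abs, ← pow_mul]
      rw [e] at this
      norm_num at this
      exact this
    have hE : u ^ 4 ≤ rexp (π * u ^ 2) := by
      have h1 := Real.quadratic_le_exp_of_nonneg (x := π * u ^ 2) (by positivity)
      have h2 : 3 * u ^ 2 ≤ π * u ^ 2 := by have := Real.pi_gt_three; nlinarith [sq_nonneg u]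
      have h3 : (3 * u ^ 2) ^ 2 ≤ (π * u ^ 2) ^ 2 := by gcongr
      nlinarith [sq_nonneg u, sq_nonneg (u ^ 2)]
    rw [neg_mul, Real.exp_neg]
    have h16 : (0:ℝ) < 16 ^ m := by positivity
    calc (rexp (π * u ^ 2))⁻¹ ≤ ((16:ℝ) ^ m)⁻¹ := by gcongr; linarith
      _ = _ := by rw [pow_succ, one_div, inv_pow]; ring

end Sg

section Sh
open Real Set Filter Topology MeasureTheory

noncomputable def II (a b M : ℝ) : Finset ℕ := Finset.Icc ⌈a * M⌉₊ ⌊b * M⌋₊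
noncomputable def om (c M : ℝ) (n : ℕ) : ℝ := (n / M : ℝ) ^ c
noncomputable def Nc (I : Finset ℕ) (ω : ℕ → ℝ) (δ : ℝ) : ℝ :=
  ∑ q ∈ I ×ˢ I ×ˢ I ×ˢ I, if |Dl ω q| ≤ δ then 1 else 0
def PP (c β : ℝ) : Prop := ∀ a b : ℝ, 0 < a → a < b → ∃ C > 0, ∀ M > 0, ∀ T > 0,
  Nc (II a b M) (om c M) (1 / T) ≤ C * (M ^ β + M ^ 4 / T)

lemma dir2_count {c β : ℝ} (h : PP c β) (a b : ℝ) (ha : 0 < a) (hab : a < b) :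
    ∃ C > 0, ∀ M > 0, ∀ μ > 0, ∀ J ⊆ II a b M,
      ∑ q ∈ J ×ˢ J ×ˢ J ×ˢ J, rexp (-π * (μ * Dl (om c M) q) ^ 2) ≤ C * (M ^ β + M ^ 4 / μ) := by
  obtain ⟨C, hC, H⟩ := h a b ha hab
  refine ⟨32 * C, by positivity, ?_⟩
  intro M hM μ hμ J hJ
  set I := II a b M with hI
  have hsub : J ×ˢ J ×ˢ J ×ˢ J ⊆ I ×ˢ I ×ˢ I ×ˢ I :=
    Finset.product_subset_product hJ (Finset.product_subset_product hJ (Finset.product_subset_product hJ hJ))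
  refine (Finset.sum_le_sum_of_subset_of_nonneg hsub (fun _ _ _ => by positivity)).trans ?_
  set Q := I ×ˢ I ×ˢ I ×ˢ I with hQ
  obtain ⟨K, hK⟩ := pow_unbounded_of_one_lt (∑ q ∈ Q, |μ * Dl (om c M) q|) (by norm_num : (1:ℝ) < 2)
  have hK' : ∀ q ∈ Q, |μ * Dl (om c M) q| ≤ 2 ^ K := fun q hq =>
    (Finset.single_le_sum (f := fun q => |μ * Dl (om c M) q|) (fun _ _ => abs_nonneg _) hq).trans hK.le
  have hR : 0 ≤ M ^ β + M ^ 4 / μ := by positivity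
  calc _ ≤ ∑ q ∈ Q, 16 * ∑ k ∈ Finset.range (K + 1), (1 / 16 : ℝ) ^ k *
          (if |μ * Dl (om c M) q| ≤ 2 ^ k then 1 else 0) :=
        Finset.sum_le_sum fun q hq => gauss_layer K _ (hK' q hq)
    _ = 16 * ∑ k ∈ Finset.range (K + 1), (1 / 16 : ℝ) ^ k *
          ∑ q ∈ Q, (if |μ * Dl (om c M) q| ≤ 2 ^ k then 1 else 0) := by
        rw [← Finset.mul_sum, Finset.sum_comm]
        simp_rw [Finset.mul_sum]
    _ ≤ 16 * ∑ k ∈ Finset.range (K + 1), (1 / 2 : ℝ) ^ k * (C * (M ^ β + M ^ 4 / μ)) := by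
        refine mul_le_mul_of_nonneg_left (Finset.sum_le_sum fun k hk => ?_) (by norm_num)
        have e : ∑ q ∈ Q, (if |μ * Dl (om c M) q| ≤ 2 ^ k then (1:ℝ) else 0) =
            Nc I (om c M) (1 / (μ / 2 ^ k)) := by
          unfold Nc
          refine Finset.sum_congr rfl fun q _ => ?_
          congr 1
          rw [one_div_div, le_div_iff₀ hμ, abs_mul, abs_of_pos hμ, mul_comm]
        rw [e]
        have := H M hM (μ / 2 ^ k) (by positivity)
        calc _ ≤ (1 / 16 : ℝ) ^ k * (C * (M ^ β + M ^ 4 / (μ / 2 ^ k))) := by gcongr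
          _ ≤ (1 / 16 : ℝ) ^ k * (C * (2 ^ k * (M ^ β + M ^ 4 / μ))) := by
            gcongr
            rw [div_div_eq_mul_div, mul_add]
            have h1 : (1:ℝ) ≤ 2 ^ k := one_le_pow₀ (by norm_num)
            have : M ^ β ≤ 2 ^ k * M ^ β := le_mul_of_one_le_left (by positivity) h1
            have : M ^ 4 * 2 ^ k / μ = 2 ^ k * (M ^ 4 / μ) := by ring
            linarith
          _ = ((1 / 16 : ℝ) ^ k * 2 ^ k) * (C * (M ^ β + M ^ 4 / μ)) := by ring
          _ ≤ _ := by
            gcongr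
            rw [← mul_pow]
            gcongr
            norm_num
    _ = 16 * (∑ k ∈ Finset.range (K + 1), (1 / 2 : ℝ) ^ k) * (C * (M ^ β + M ^ 4 / μ)) := by
        rw [← Finset.sum_mul]; ring
    _ ≤ 16 * 2 * (C * (M ^ β + M ^ 4 / μ)) := by
        gcongr
        exact sum_geometric_two_le _
    _ = _ := by ring

lemma cov_bound (s : ℝ) (hs : 0 < s) : ∃ D > 0, ∀ T > 0, ∀ G : ℝ → ℝ, Continuous G → (∀ v, 0 ≤ G v) →
    Integrable (fun v => G v * rexp (-π * v ^ 2)) →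
    ∫ x in T..(2 * T), G ((x / T) ^ (-s)) ≤ D * T * ∫ v, G v * rexp (-π * v ^ 2) := by
  refine ⟨2 ^ (s + 1) / s * rexp π, by positivity, ?_⟩
  intro T hT G hG hG0 hGi
  set φ : ℝ → ℝ := fun x => (x / T) ^ (-s) with hφ
  set φ' : ℝ → ℝ := fun x => -s * (x / T) ^ (-s - 1) * (1 / T) with hφ'
  have hpos : ∀ x ∈ Icc T (2 * T), 1 ≤ x / T ∧ x / T ≤ 2 := fun x hx =>
    ⟨by rw [le_div_iff₀ hT]; linarith [hx.1], by rw [div_le_iff₀ hT]; exact hx.2⟩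
  have hd : ∀ x ∈ Icc T (2 * T), HasDerivWithinAt φ (φ' x) (Icc T (2 * T)) x := by
    intro x hx
    have h0 : x / T ≠ 0 := by have := (hpos x hx).1; linarith
    have h1 := (Real.hasDerivAt_rpow_const (x := x / T) (p := -s) (Or.inl h0)).comp x
      ((hasDerivAt_id x).div_const T)
    exact h1.hasDerivWithinAt
  have hinj : InjOn φ (Icc T (2 * T)) := by
    intro x hx y hy hxy
    have h1 := (hpos x hx).1
    have h2 := (hpos y hy).1
    have := (Real.rpow_left_inj (x := x / T) (y := y / T) (z := -s) (by linarith) (by linarith) (by linarith)).mp hxy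
    field_simp at this
    exact this
  have hcφ : ContinuousOn φ (Icc T (2 * T)) := fun x hx => (hd x hx).continuousWithinAt
  have hcφ' : ContinuousOn φ' (Icc T (2 * T)) := by
    have : ContinuousOn (fun x : ℝ => (x / T) ^ (-s - 1)) (Icc T (2 * T)) := by
      refine ContinuousOn.rpow_const (by fun_prop) (fun x hx => Or.inl ?_)
      have := (hpos x hx).1; linarith
    fun_prop
  have hcG : ContinuousOn (fun x => G (φ x)) (Icc T (2 * T)) := hG.comp_continuousOn hcφ
  have himg : φ '' Icc T (2 * T) ⊆ Icc 0 1 := by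
    rintro _ ⟨x, hx, rfl⟩
    have h1 := (hpos x hx).1
    exact ⟨by simp only [hφ]; positivity, Real.rpow_le_one_of_one_le_of_nonpos h1 (by linarith)⟩
  have hcomp : IsCompact (φ '' Icc T (2 * T)) := isCompact_Icc.image_of_continuousOn hcφ
  rw [intervalIntegral.integral_of_le (by linarith), ← integral_Icc_eq_integral_Ioc]
  calc ∫ x in Icc T (2 * T), G (φ x)
      ≤ ∫ x in Icc T (2 * T), (2 ^ (s + 1) / s * T) * (|φ' x| • G (φ x)) := by
        refine setIntegral_mono_on (hcG.integrableOn_compact isCompact_Icc) ?_ measurableSet_Icc ?_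
        · refine ContinuousOn.integrableOn_compact isCompact_Icc ?_
          exact continuousOn_const.mul (hcφ'.abs.smul hcG)
        · intro x hx
          obtain ⟨h1, h2⟩ := hpos x hx
          have h3 : 1 ≤ (2 ^ (s + 1) / s * T) * |φ' x| := by
            have e : |φ' x| = s * (x / T) ^ (-s - 1) * (1 / T) := by
              simp only [hφ']
              rw [abs_mul, abs_mul, abs_neg, abs_of_pos hs, abs_of_pos (by positivity : 0 < 1 / T),
                abs_of_nonneg (by positivity)]
            have e2 : (2:ℝ) ^ (-s - 1) ≤ (x / T) ^ (-s - 1) :=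
              Real.rpow_le_rpow_of_nonpos (by linarith) h2 (by linarith)
            have e3 : (2:ℝ) ^ (s + 1) * 2 ^ (-s - 1) = 1 := by
              rw [← Real.rpow_add (by norm_num)]; simp
            calc (1:ℝ) = (2:ℝ) ^ (s + 1) * 2 ^ (-s - 1) := e3.symm
              _ ≤ (2:ℝ) ^ (s + 1) * (x / T) ^ (-s - 1) := by gcongr
              _ = _ := by rw [e]; field_simp
          rw [smul_eq_mul, ← mul_assoc]
          exact le_mul_of_one_le_left (hG0 _) h3
    _ = (2 ^ (s + 1) / s * T) * ∫ v in φ '' Icc T (2 * T), G v := by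
        rw [integral_const_mul, integral_image_eq_integral_abs_deriv_smul measurableSet_Icc hd hinj]
    _ ≤ (2 ^ (s + 1) / s * T) * ∫ v in φ '' Icc T (2 * T), rexp π * (G v * rexp (-π * v ^ 2)) := by
        refine mul_le_mul_of_nonneg_left ?_ (by positivity)
        refine setIntegral_mono_on (hG.continuousOn.integrableOn_compact hcomp)
          (hGi.const_mul _).integrableOn hcomp.measurableSet ?_
        intro v hv
        have hv1 := himg hv
        have : 1 ≤ rexp π * rexp (-π * v ^ 2) := by
          rw [← Real.exp_add]
          apply Real.one_le_exp
          have : v ^ 2 ≤ 1 := by have := hv1.1; have := hv1.2; nlinarith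
          have := Real.pi_pos
          nlinarith
        calc G v = G v * 1 := by ring
          _ ≤ G v * (rexp π * rexp (-π * v ^ 2)) := by have := hG0 v; gcongr
          _ = _ := by ring
    _ ≤ (2 ^ (s + 1) / s * T) * (rexp π * ∫ v, G v * rexp (-π * v ^ 2)) := by
        rw [integral_const_mul]
        refine mul_le_mul_of_nonneg_left (mul_le_mul_of_nonneg_left ?_ (by positivity)) (by positivity)
        refine setIntegral_le_integral hGi ?_
        exact Filter.Eventually.of_forall fun v => mul_nonneg (hG0 v) (by positivity)
    _ = _ := by ring

lemma dir2 {c β : ℝ} (hc : 1 < c) (h : PP (c / (c - 1)) β) (C1 C2 : ℝ) (hC1 : 0 < C1) (hC : C1 < C2) :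
    ∃ C > 0, ∀ T > 0, ∀ M > 0, ∀ J ⊆ II C1 C2 (T / M),
      ∫ x in T..(2 * T), ‖∑ l ∈ J, ex (-((1 - 1 / c) * ((l * M) * st c x (l * M))))‖ ^ 4 ≤
        C * T * ((T / M) ^ β + (T / M) ^ 4 / T) := by
  have hc0 : 0 < c := by linarith
  have hc1 : 0 < c - 1 := by linarith
  set s := 1 / (c - 1) with hs
  have hs0 : 0 < s := by positivity
  obtain ⟨B, hB, HB⟩ := dir2_count h C1 C2 hC1 hC
  obtain ⟨D, hD, HD⟩ := cov_bound s hs0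
  have hcc : 0 < 1 - 1 / c := by rw [sub_pos, div_lt_one hc0]; exact hc
  set κ := (1 - 1 / c) * c ^ (-s) with hκ
  have hκ0 : 0 < κ := by positivity
  refine ⟨D * (B * (1 + 1 / κ)), by positivity, ?_⟩
  intro T hT M hM J hJ
  set L := T / M with hL
  have hL0 : 0 < L := by positivity
  set G : ℝ → ℝ := fun v => ‖∑ j ∈ J, ((1:ℝ) : ℂ) * ex (v * (-(κ * T)) * om (c / (c - 1)) L j)‖ ^ 4 with hG
  have hGc : Continuous G := by
    refine Continuous.pow (Continuous.norm (continuous_finsetSum _ fun j _ => ?_)) _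
    exact continuous_const.mul (ex_continuous.comp (by fun_prop))
  have hcong : ∀ x ∈ uIcc T (2 * T), ‖∑ l ∈ J, ex (-((1 - 1 / c) * ((l * M) * st c x (l * M))))‖ ^ 4 =
      G ((x / T) ^ (-s)) := by
    intro x hx
    rw [uIcc_of_le (by linarith)] at hx
    have hx0 : 0 < x := hT.trans_le hx.1
    simp only [hG]
    congr 2
    refine Finset.sum_congr rfl fun l hl => ?_
    rw [Complex.ofReal_one, one_mul]
    congr 1
    have hl0 : 0 < (l : ℝ) := by
      have := hJ hl
      simp only [II, Finset.mem_Icc, Nat.ceil_le] at this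
      exact lt_of_lt_of_le (by positivity) this.1
    have e1 : c / (c - 1) = s + 1 := by rw [hs]; field_simp; ring
    rw [om, st, e1, ← hs, hκ]
    rw [Real.rpow_add_one (by positivity), Real.rpow_neg (by positivity), Real.rpow_neg (by positivity),
      show (l * M / (c * x) : ℝ) = (l / L) / c / (x / T) by rw [hL]; field_simp,
      Real.div_rpow (by positivity) (by positivity), Real.div_rpow (by positivity) (by positivity)]
    have : (l * M : ℝ) = T * (l / L) := by rw [hL]; field_simp
    rw [this]
    field_simp
  rw [intervalIntegral.integral_congr hcong]
  have hg4 := gauss_four J (fun _ => 1) (om (c / (c - 1)) L) (-(κ * T))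
  refine (HD T hT G hGc (fun v => by simp only [hG]; positivity) hg4.1).trans ?_
  have e2 : ∫ v, G v * rexp (-π * v ^ 2) = ∑ q ∈ J ×ˢ J ×ˢ J ×ˢ J,
      rexp (-π * ((κ * T) * Dl (om (c / (c - 1)) L) q) ^ 2) := by
    rw [hg4.2]
    refine Finset.sum_congr rfl fun q _ => ?_
    rw [neg_mul (κ * T), neg_sq]; simp
  rw [e2]
  calc _ ≤ D * T * (B * (L ^ β + L ^ 4 / (κ * T))) := by
        gcongr
        exact HB L hL0 (κ * T) (by positivity) J hJ
    _ ≤ D * T * (B * ((1 + 1 / κ) * (L ^ β + L ^ 4 / T))) := by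
        gcongr
        have e : L ^ 4 / (κ * T) = 1 / κ * (L ^ 4 / T) := by field_simp
        rw [e]
        have h1 : 0 ≤ L ^ β := by positivity
        have h2 : 0 ≤ L ^ 4 / T := by positivity
        have h3 : 0 ≤ 1 / κ * L ^ β := by positivity
        nlinarith
    _ = _ := by ring

end Sh

section Si
open Real Set Filter Topology MeasureTheory

lemma Ssum_cont (c : ℝ) (W : ℝ → ℝ) (b M : ℝ) : Continuous (Ssum c W b M) := by
  unfold Ssum
  refine continuous_finsetSum _ fun n _ => ?_
  exact continuous_const.mul (ex_continuous.comp (by fun_prop))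

lemma four_add (x y : ℝ) : (x + y) ^ 4 ≤ 8 * (x ^ 4 + y ^ 4) := by
  nlinarith [sq_nonneg (x - y), sq_nonneg (x + y), sq_nonneg (x ^ 2 - y ^ 2), sq_nonneg (x * y),
      mul_nonneg (sq_nonneg (x - y)) (sq_nonneg (x + y)), mul_nonneg (sq_nonneg (x - y)) (sq_nonneg (x - y)),
      mul_nonneg (sq_nonneg (x - y)) (sq_nonneg x), mul_nonneg (sq_nonneg (x - y)) (sq_nonneg y)]

lemma block {c β : ℝ} (hc : 1 < c) (h : PP (c / (c - 1)) β) {a b : ℝ} (w : Wt a b) (ha : 0 < a) (hab : a < b) :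
    ∃ C > 0, ∀ T ≥ 1, ∀ M ≥ 1, ∫ x in T..(2 * T), ‖Ssum c w.W b M x‖ ^ 4 ≤
      C * (M ^ 4 / T + M ^ (4 - β) * T ^ (β - 1) + T ^ 2) := by
  have hb : 0 < b := ha.trans hab
  have hc0 : 0 < c := by linarith
  have hc1 : 0 < c - 1 := by linarith
  obtain ⟨CE, hCE, HE⟩ := poisson_main w c hc ha hab
  set C1 := c * a ^ (c - 1) / 2 with hC1
  set C2 := 4 * c * b ^ (c - 1) with hC2
  have hC1p : 0 < C1 := by positivity
  have hC2p : 0 < C2 := by positivity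
  have hC12 : C1 < C2 := by
    have : a ^ (c - 1) < b ^ (c - 1) := Real.rpow_lt_rpow ha.le hab hc1
    have : c * a ^ (c - 1) < c * b ^ (c - 1) := by gcongr
    have : 0 < c * a ^ (c - 1) := by positivity
    rw [hC1, hC2]; linarith
  obtain ⟨A, CA, hCA, HA⟩ := amp w c hc ha hab C1 C2 hC1p hC12.le
  obtain ⟨CD, hCD, HD⟩ := dir2 hc h C1 C2 hC1p hC12
  refine ⟨8 * CE ^ 4 + 64 * CA ^ 4 * (1 + C2 ^ 4) * CD, by positivity, ?_⟩
  intro T hT M hM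
  have hT0 : 0 < T := by linarith
  have hM0 : 0 < M := by linarith
  set p := ⌈C1 * (T / M)⌉₊ with hp
  set q := ⌊C2 * (T / M)⌋₊ with hq
  have hqle : (q : ℝ) ≤ C2 * (T / M) := Nat.floor_le (by positivity)
  set α := CA * T ^ (-(1 / 2) : ℝ) with hα
  set δ := CA * (M / T) * T ^ (-(1 / 2) : ℝ) with hδ
  set e : ℝ → ℕ → ℂ := fun x l => ex (-((1 - 1 / c) * ((l * M) * st c x (l * M)))) with he
  set P : ℕ → ℝ → ℂ := fun k x => ∑ l ∈ Finset.Icc p k, e x l with hP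
  set D := CD * T * ((T / M) ^ β + (T / M) ^ 4 / T) with hD
  have hsub : ∀ k ≤ q, Finset.Icc p k ⊆ II C1 C2 (T / M) := by
    intro k hk
    exact Finset.Icc_subset_Icc le_rfl hk
  have hDk : ∀ k ≤ q, ∫ x in T..(2 * T), ‖P k x‖ ^ 4 ≤ D := fun k hk =>
    HD T hT0 M hM0 _ (hsub k hk)
  have hmem : ∀ l ∈ Finset.Icc p q, (l * M : ℝ) ∈ Icc (C1 * T) (C2 * T) := by
    intro l hl
    rw [Finset.mem_Icc] at hl
    constructor
    · have := Nat.ceil_le.mp hl.1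
      rw [← mul_div_assoc, div_le_iff₀ hM0] at this; exact this
    · have : (l : ℝ) ≤ C2 * (T / M) := le_trans (by exact_mod_cast hl.2) hqle
      rw [← mul_div_assoc, le_div_iff₀ hM0] at this; exact this
  have hpt : ∀ x ∈ Icc T (2 * T), ‖Ssum c w.W b M x‖ ^ 4 ≤
      8 * (CE * M * T ^ (-(1 / 2) : ℝ)) ^ 4 + (64 * M ^ 4 * α ^ 4 * ‖P q x‖ ^ 4 +
        64 * M ^ 4 * (δ ^ 4 * q ^ 3) * ∑ k ∈ Finset.Ico p q, ‖P k x‖ ^ 4) := by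
    intro x hx
    have h1 := HE T hT M hM x hx
    have h2 : ∑ l ∈ Finset.Icc p q, Jint c w.W x (l * M) = ∑ l ∈ Finset.Icc p q, A x (l * M) * e x l := by
      refine Finset.sum_congr rfl fun l hl => ?_
      rw [(HA T hT0 x hx _ (hmem l hl)).1, mul_comm]
    rw [h2] at h1
    have h3 := abel_four (fun l => A x (l * M)) (e x) p q α δ (by positivity) (by positivity)
      (fun l hl => (HA T hT0 x hx _ (hmem l hl)).2.1) (by
        intro k hk
        rw [Finset.mem_Ico] at hk
        have k1 := hmem (k + 1) (by rw [Finset.mem_Icc]; omega)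
        have k2 := hmem k (by rw [Finset.mem_Icc]; omega)
        have := (HA T hT0 x hx _ k1).2.2 _ k2
        have e3 : |((k + 1 : ℕ) : ℝ) * M - k * M| = M := by
          push_cast; rw [show ((k:ℝ) + 1) * M - k * M = M by ring, abs_of_pos hM0]
        rw [e3] at this
        exact this)
    set Z := ∑ l ∈ Finset.Icc p q, A x (l * M) * e x l with hZ
    have h4 : ‖Ssum c w.W b M x‖ ≤ CE * M * T ^ (-(1 / 2) : ℝ) + M * ‖Z‖ := by
      have : ‖Ssum c w.W b M x‖ ≤ ‖Ssum c w.W b M x - M * Z‖ + ‖(M : ℂ) * Z‖ := by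
        have := norm_add_le (Ssum c w.W b M x - M * Z) (M * Z)
        simpa using this
      rw [norm_mul, Complex.norm_real, Real.norm_of_nonneg hM0.le] at this
      linarith
    calc _ ≤ (CE * M * T ^ (-(1 / 2) : ℝ) + M * ‖Z‖) ^ 4 := by gcongr
      _ ≤ 8 * ((CE * M * T ^ (-(1 / 2) : ℝ)) ^ 4 + (M * ‖Z‖) ^ 4) := four_add _ _
      _ = 8 * (CE * M * T ^ (-(1 / 2) : ℝ)) ^ 4 + 8 * M ^ 4 * ‖Z‖ ^ 4 := by ring
      _ ≤ 8 * (CE * M * T ^ (-(1 / 2) : ℝ)) ^ 4 + 8 * M ^ 4 * (8 * (α ^ 4 * ‖P q x‖ ^ 4 +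
            δ ^ 4 * q ^ 3 * ∑ k ∈ Finset.Ico p q, ‖P k x‖ ^ 4)) := by gcongr
      _ = _ := by ring
  have hPc : ∀ k, IntervalIntegrable (fun x => ‖P k x‖ ^ 4) volume T (2 * T) := by
    intro k
    apply ContinuousOn.intervalIntegrable
    rw [uIcc_of_le (by linarith)]
    refine ContinuousOn.pow (ContinuousOn.norm (continuousOn_finsetSum _ fun l _ => ?_)) _
    refine ex_continuous.comp_continuousOn ?_
    have : ContinuousOn (fun x => st c x (l * M)) (Icc T (2 * T)) := by
      unfold st
      refine ContinuousOn.rpow_const (ContinuousOn.div continuousOn_const (by fun_prop) ?_) ?_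
      · intro x hx
        have : 0 < x := hT0.trans_le hx.1
        positivity
      · intro x _; right; positivity
    fun_prop
  have hsumI : IntervalIntegrable (fun x => ∑ k ∈ Finset.Ico p q, ‖P k x‖ ^ 4) volume T (2 * T) := by
    rw [show (fun x => ∑ k ∈ Finset.Ico p q, ‖P k x‖ ^ 4) = ∑ k ∈ Finset.Ico p q, fun x => ‖P k x‖ ^ 4 by
      ext x; simp]
    exact IntervalIntegrable.sum _ (fun k _ => hPc k)
  have hmono := intervalIntegral.integral_mono_on (by linarith : T ≤ 2 * T)
    (((Ssum_cont c w.W b M).norm.pow 4).intervalIntegrable _ _)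
    ((intervalIntegrable_const (c := 8 * (CE * M * T ^ (-(1 / 2) : ℝ)) ^ 4)).add
      (((hPc q).const_mul (64 * M ^ 4 * α ^ 4)).add (hsumI.const_mul (64 * M ^ 4 * (δ ^ 4 * q ^ 3))))) hpt
  refine hmono.trans ?_
  rw [intervalIntegral.integral_add intervalIntegrable_const
      (((hPc q).const_mul _).add (hsumI.const_mul _)),
    intervalIntegral.integral_add ((hPc q).const_mul _) (hsumI.const_mul _),
    intervalIntegral.integral_const, intervalIntegral.integral_const_mul, intervalIntegral.integral_const_mul,
    intervalIntegral.integral_finsetSum (fun k _ => hPc k)]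
  have hsumD : ∑ k ∈ Finset.Ico p q, ∫ x in T..(2 * T), ‖P k x‖ ^ 4 ≤ q * D := by
    have hD0 : 0 ≤ D := by positivity
    calc _ ≤ ∑ k ∈ Finset.Ico p q, D := Finset.sum_le_sum fun k hk =>
          hDk k (by rw [Finset.mem_Ico] at hk; omega)
      _ = ((Finset.Ico p q).card : ℝ) * D := by rw [Finset.sum_const, nsmul_eq_mul]
      _ ≤ _ := by
        gcongr
        rw [Nat.card_Ico]; exact Nat.sub_le _ _
  have hhalf : (T ^ (-(1 / 2) : ℝ)) ^ 4 = (T ^ 2)⁻¹ := by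
    rw [← Real.rpow_natCast, ← Real.rpow_mul hT0.le, ← Real.rpow_natCast, ← Real.rpow_neg hT0.le]
    norm_num
  have hD0 : 0 ≤ D := by positivity
  have hδq : δ ^ 4 * (q : ℝ) ^ 3 * q ≤ CA ^ 4 * C2 ^ 4 * (T ^ 2)⁻¹ := by
    calc δ ^ 4 * (q : ℝ) ^ 3 * q = δ ^ 4 * (q : ℝ) ^ 4 := by ring
      _ ≤ δ ^ 4 * (C2 * (T / M)) ^ 4 := by gcongr
      _ = CA ^ 4 * C2 ^ 4 * (T ^ (-(1 / 2) : ℝ)) ^ 4 := by rw [hδ]; field_simp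
      _ = _ := by rw [hhalf]
  have hα4 : α ^ 4 = CA ^ 4 * (T ^ 2)⁻¹ := by rw [hα, mul_pow, hhalf]
  have t1 : 64 * M ^ 4 * α ^ 4 * ∫ x in T..(2 * T), ‖P q x‖ ^ 4 ≤ 64 * M ^ 4 * (CA ^ 4 * (T ^ 2)⁻¹) * D := by
    rw [hα4]
    gcongr
    exact hDk q le_rfl
  have t2 : 64 * M ^ 4 * (δ ^ 4 * q ^ 3) * ∑ k ∈ Finset.Ico p q, ∫ x in T..(2 * T), ‖P k x‖ ^ 4 ≤
      64 * M ^ 4 * (CA ^ 4 * C2 ^ 4 * (T ^ 2)⁻¹) * D := by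
    calc _ ≤ 64 * M ^ 4 * (δ ^ 4 * q ^ 3) * (q * D) := by gcongr
      _ = 64 * M ^ 4 * (δ ^ 4 * (q : ℝ) ^ 3 * q) * D := by ring
      _ ≤ _ := by gcongr
  have t3 : (2 * T - T) • (8 * (CE * M * T ^ (-(1 / 2) : ℝ)) ^ 4) = 8 * CE ^ 4 * (M ^ 4 / T) := by
    rw [mul_pow, hhalf, smul_eq_mul]; field_simp; ring
  have t4 : M ^ 4 * (T ^ 2)⁻¹ * D = CD * (M ^ (4 - β) * T ^ (β - 1) + T ^ 2) := by
    rw [hD, Real.div_rpow hT0.le hM0.le, Real.rpow_sub hM0, Real.rpow_sub hT0, Real.rpow_one,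
      show M ^ (4 : ℝ) = M ^ 4 by exact_mod_cast Real.rpow_natCast M 4]
    field_simp
  rw [t3]
  have t5 : 0 ≤ M ^ 4 / T := by positivity
  have t6 : 0 ≤ M ^ (4 - β) * T ^ (β - 1) + T ^ 2 := by positivity
  calc _ ≤ 8 * CE ^ 4 * (M ^ 4 / T) + (64 * M ^ 4 * (CA ^ 4 * (T ^ 2)⁻¹) * D +
        64 * M ^ 4 * (CA ^ 4 * C2 ^ 4 * (T ^ 2)⁻¹) * D) := by linarith
    _ = 8 * CE ^ 4 * (M ^ 4 / T) + 64 * CA ^ 4 * (1 + C2 ^ 4) * (M ^ 4 * (T ^ 2)⁻¹ * D) := by ring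
    _ = 8 * CE ^ 4 * (M ^ 4 / T) + 64 * CA ^ 4 * (1 + C2 ^ 4) * CD * (M ^ (4 - β) * T ^ (β - 1) + T ^ 2) := by
      rw [t4]; ring
    _ ≤ _ := by
      have u1 : 0 ≤ 8 * CE ^ 4 := by positivity
      have u2 : 0 ≤ 64 * CA ^ 4 * (1 + C2 ^ 4) * CD := by positivity
      nlinarith [mul_nonneg u1 t6, mul_nonneg u2 t5]

end Si

section Sj
open Real Set Filter Topology MeasureTheory

lemma dyadic {c β : ℝ} (hc : 1 < c) (hβ : 2 ≤ β) (hβ3 : β ≤ 3) (h : PP (c / (c - 1)) β) {a b : ℝ}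
    (w : Wt a b) (ha : 0 < a) (hab : a < b) :
    ∃ C > 0, ∀ M ≥ 1, ∀ X > 0, ∫ x in 0..X, ‖Ssum c w.W b M x‖ ^ 4 ≤
      C * (M ^ 4 + M ^ (4 - β) * X ^ (β - 1) + X ^ 2) := by
  have hb : 0 < b := ha.trans hab
  obtain ⟨C0, hC0, H0⟩ := block hc h w ha hab
  have hK := w.K_nonneg
  set A := C0 + (w.K * (b + 1)) ^ 4 with hA
  have hA0 : 0 < A := by positivity
  refine ⟨4 * A, by positivity, ?_⟩
  intro M hM X hX
  have hM0 : 0 < M := by linarith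
  set g : ℝ → ℝ := fun x => ‖Ssum c w.W b M x‖ ^ 4 with hg
  have hgc : Continuous g := (Ssum_cont c w.W b M).norm.pow 4
  have hg0 : ∀ x, 0 ≤ g x := fun x => by simp only [hg]; positivity
  have hgb : ∀ x, g x ≤ A * M ^ 4 := by
    intro x
    have h1 : ‖Ssum c w.W b M x‖ ≤ w.K * (b + 1) * M := by
      unfold Ssum
      calc _ ≤ ∑ n ∈ Finset.range (⌊b * M⌋₊ + 1), ‖(w.W (n / M) : ℂ) * ex (x * (n / M : ℝ) ^ c)‖ := norm_sum_le _ _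
        _ ≤ ∑ n ∈ Finset.range (⌊b * M⌋₊ + 1), w.K := by
          refine Finset.sum_le_sum fun n _ => ?_
          rw [norm_mul, ex_norm, mul_one, Complex.norm_real]
          exact w.b0 _
        _ = (⌊b * M⌋₊ + 1) * w.K := by rw [Finset.sum_const, Finset.card_range, nsmul_eq_mul]; push_cast; ring
        _ ≤ (b * M + M) * w.K := by
          gcongr
          exact Nat.floor_le (by positivity)
        _ = _ := by ring
    calc g x ≤ (w.K * (b + 1) * M) ^ 4 := by simp only [hg]; gcongr
      _ = (w.K * (b + 1)) ^ 4 * M ^ 4 := by ring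
      _ ≤ _ := by gcongr; rw [hA]; linarith
  have hii : ∀ u v, IntervalIntegrable g volume u v := fun u v => hgc.intervalIntegrable u v
  have hmono : ∀ u v, 0 ≤ u → u ≤ v → ∫ x in 0..u, g x ≤ ∫ x in 0..v, g x := by
    intro u v hu huv
    rw [← intervalIntegral.integral_add_adjacent_intervals (hii 0 u) (hii u v)]
    have := intervalIntegral.integral_nonneg huv (fun x _ => hg0 x) (μ := volume)
    linarith
  have h1 : ∫ x in 0..1, g x ≤ A * M ^ 4 := by
    have := intervalIntegral.integral_mono_on (by norm_num : (0:ℝ) ≤ 1) (hii 0 1)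
      (intervalIntegrable_const (c := A * M ^ 4)) (fun x _ => hgb x)
    simpa using this
  have hdy : ∀ k : ℕ, ∫ x in 0..((2:ℝ) ^ k), g x ≤
      A * (M ^ 4 * (3 - 2 / 2 ^ k) + M ^ (4 - β) * ((2:ℝ) ^ k) ^ (β - 1) + ((2:ℝ) ^ k) ^ 2) := by
    intro k
    induction k with
    | zero =>
      rw [pow_zero]
      refine h1.trans ?_
      have : 0 ≤ M ^ (4 - β) * (1:ℝ) ^ (β - 1) := by positivity
      have := mul_nonneg hA0.le this
      nlinarith
    | succ k ih =>
      set R := (2:ℝ) ^ k with hR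
      have hR1 : 1 ≤ R := one_le_pow₀ (by norm_num)
      have hR0 : 0 < R := by linarith
      rw [pow_succ, ← hR, mul_comm R 2]
      rw [← intervalIntegral.integral_add_adjacent_intervals (hii 0 R) (hii R (2 * R))]
      have hbl := H0 R hR1 M hM
      have e1 : 2 * (M ^ (4 - β) * R ^ (β - 1)) ≤ M ^ (4 - β) * (2 * R) ^ (β - 1) := by
        rw [Real.mul_rpow (by norm_num) hR0.le]
        have : (2:ℝ) ≤ 2 ^ (β - 1) := by
          calc (2:ℝ) = 2 ^ (1:ℝ) := by simp
            _ ≤ _ := Real.rpow_le_rpow_of_exponent_le (by norm_num) (by linarith)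
        calc 2 * (M ^ (4 - β) * R ^ (β - 1)) ≤ 2 ^ (β - 1) * (M ^ (4 - β) * R ^ (β - 1)) := by gcongr
          _ = _ := by ring
      have hCA : C0 ≤ A := by rw [hA]; have : 0 ≤ (w.K * (b + 1)) ^ 4 := by positivity
                              linarith
      have hbl2 : C0 * (M ^ 4 / R + M ^ (4 - β) * R ^ (β - 1) + R ^ 2) ≤
        A * (M ^ 4 / R + M ^ (4 - β) * R ^ (β - 1) + R ^ 2) := by gcongr
      calc _ ≤ A * (M ^ 4 * (3 - 2 / R) + M ^ (4 - β) * R ^ (β - 1) + R ^ 2) +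
            A * (M ^ 4 / R + M ^ (4 - β) * R ^ (β - 1) + R ^ 2) := by
              have := hbl.trans hbl2
              simp only [hg] at ih ⊢
              linarith
        _ = A * (M ^ 4 * (3 - 2 / R) + M ^ 4 / R + 2 * (M ^ (4 - β) * R ^ (β - 1)) + 2 * R ^ 2) := by ring
        _ ≤ _ := by
          have e2 : M ^ 4 * (3 - 2 / R) + M ^ 4 / R = M ^ 4 * (3 - 2 / (2 * R)) := by field_simp; ring
          gcongr A * (?_ + ?_ + ?_)
          · rw [e2]
          · nlinarith
  rcases le_or_gt X 1 with hX1 | hX1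
  · have : ∫ x in 0..X, g x ≤ A * M ^ 4 := (hmono X 1 hX.le hX1).trans h1
    refine this.trans ?_
    have h3 : 0 ≤ M ^ (4 - β) * X ^ (β - 1) + X ^ 2 := by positivity
    have : 0 ≤ M ^ 4 := by positivity
    nlinarith [mul_nonneg hA0.le h3, mul_nonneg hA0.le this]
  · obtain ⟨n, hn1, hn2⟩ := exists_nat_pow_near hX1.le (by norm_num : (1:ℝ) < 2)
    refine (hmono X _ hX.le hn2.le).trans ((hdy (n + 1)).trans ?_)
    set R := (2:ℝ) ^ (n + 1) with hR
    have hR2 : R ≤ 2 * X := by rw [hR, pow_succ]; linarith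
    have hR0 : 0 < R := by positivity
    have e1 : R ^ (β - 1) ≤ 4 * X ^ (β - 1) := by
      calc R ^ (β - 1) ≤ (2 * X) ^ (β - 1) := Real.rpow_le_rpow hR0.le hR2 (by linarith)
        _ = 2 ^ (β - 1) * X ^ (β - 1) := Real.mul_rpow (by norm_num) hX.le
        _ ≤ 4 * X ^ (β - 1) := by
          gcongr
          calc (2:ℝ) ^ (β - 1) ≤ 2 ^ (2:ℝ) := Real.rpow_le_rpow_of_exponent_le (by norm_num) (by linarith)
            _ = 4 := by norm_num
    have e2 : R ^ 2 ≤ 4 * X ^ 2 := by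
      calc R ^ 2 ≤ (2 * X) ^ 2 := by gcongr
        _ = _ := by ring
    have e3 : M ^ 4 * (3 - 2 / R) ≤ 4 * M ^ 4 := by
      have : 0 < 2 / R := by positivity
      have : 0 < M ^ 4 := by positivity
      nlinarith
    calc _ ≤ A * (4 * M ^ 4 + M ^ (4 - β) * (4 * X ^ (β - 1)) + 4 * X ^ 2) := by gcongr
      _ = _ := by ring

lemma gauss_tail (h : ℝ → ℝ) (hc : Continuous h) (h0 : ∀ v, 0 ≤ h v)
    (hi : Integrable (fun v => h v * rexp (-π * v ^ 2))) (B : ℝ) (hB : 0 ≤ B)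
    (hb : ∀ k : ℕ, ∫ v in (-(2:ℝ) ^ k)..(2 ^ k), h v ≤ B * 4 ^ k) :
    ∫ v, h v * rexp (-π * v ^ 2) ≤ 32 * B := by
  have hlim := intervalIntegral_tendsto_integral (μ := volume) hi
    (tendsto_neg_atTop_atBot.comp (tendsto_pow_atTop_atTop_of_one_lt (by norm_num : (1:ℝ) < 2)))
    (tendsto_pow_atTop_atTop_of_one_lt (by norm_num : (1:ℝ) < 2))
  refine le_of_tendsto' hlim fun K => ?_
  have hset : ∀ (k : ℕ) (f : ℝ → ℝ), ∫ v in (-(2:ℝ) ^ k)..(2 ^ k), f v =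
      ∫ v, (Icc (-(2:ℝ) ^ k) (2 ^ k)).indicator f v := by
    intro k f
    have : (0:ℝ) < 2 ^ k := by positivity
    rw [intervalIntegral.integral_of_le (by linarith), ← integral_Icc_eq_integral_Ioc,
      integral_indicator measurableSet_Icc]
  have hint : ∀ k : ℕ, Integrable ((Icc (-(2:ℝ) ^ k) (2 ^ k)).indicator h) := fun k =>
    (integrable_indicator_iff measurableSet_Icc).mpr (hc.continuousOn.integrableOn_compact isCompact_Icc)
  simp only [Function.comp]
  rw [hset]
  calc ∫ v, (Icc (-(2:ℝ) ^ K) (2 ^ K)).indicator (fun v => h v * rexp (-π * v ^ 2)) v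
      ≤ ∫ v, ∑ k ∈ Finset.range (K + 1), 16 * (1 / 16 : ℝ) ^ k * (Icc (-(2:ℝ) ^ k) (2 ^ k)).indicator h v := by
        refine integral_mono ?_ ?_ ?_
        · exact hi.indicator measurableSet_Icc
        · exact integrable_finsetSum _ fun k _ => (hint k).const_mul _
        · intro v
          simp only
          by_cases hv : v ∈ Icc (-(2:ℝ) ^ K) (2 ^ K)
          · rw [indicator_of_mem hv]
            have := gauss_layer K v (abs_le.mpr hv)
            calc _ ≤ h v * (16 * ∑ k ∈ Finset.range (K + 1), (1 / 16 : ℝ) ^ k * (if |v| ≤ 2 ^ k then 1 else 0)) := by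
                  have := h0 v; gcongr
              _ = _ := by
                rw [Finset.mul_sum, Finset.mul_sum]
                refine Finset.sum_congr rfl fun k _ => ?_
                by_cases hk : |v| ≤ 2 ^ k
                · have hm : v ∈ Icc (-(2:ℝ) ^ k) (2 ^ k) := abs_le.mp hk
                  rw [indicator_of_mem hm, if_pos hk]; ring
                · have hm : v ∉ Icc (-(2:ℝ) ^ k) (2 ^ k) := fun h' => hk (abs_le.mpr h')
                  rw [indicator_of_notMem hm, if_neg hk]; ring
          · rw [indicator_of_notMem hv]
            refine Finset.sum_nonneg fun k _ => ?_
            have := indicator_nonneg (s := Icc (-(2:ℝ) ^ k) (2 ^ k)) (fun v _ => h0 v) v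
            positivity
    _ = ∑ k ∈ Finset.range (K + 1), 16 * (1 / 16 : ℝ) ^ k * ∫ v in (-(2:ℝ) ^ k)..(2 ^ k), h v := by
        rw [integral_finsetSum _ fun k _ => (hint k).const_mul _]
        refine Finset.sum_congr rfl fun k _ => ?_
        rw [integral_const_mul, hset]
    _ ≤ ∑ k ∈ Finset.range (K + 1), 16 * B * (1 / 2 : ℝ) ^ k := by
        refine Finset.sum_le_sum fun k _ => ?_
        calc _ ≤ 16 * (1 / 16 : ℝ) ^ k * (B * 4 ^ k) := by gcongr; exact hb k
          _ = 16 * B * ((1 / 16 : ℝ) ^ k * 4 ^ k) := by ring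
          _ ≤ _ := by
            rw [← mul_pow]
            gcongr
            norm_num
    _ = 16 * B * ∑ k ∈ Finset.range (K + 1), (1 / 2 : ℝ) ^ k := by rw [Finset.mul_sum]
    _ ≤ 16 * B * 2 := by gcongr; exact sum_geometric_two_le _
    _ = _ := by ring

lemma Ssum_neg (c : ℝ) (W : ℝ → ℝ) (b M x : ℝ) : ‖Ssum c W b M (-x)‖ = ‖Ssum c W b M x‖ := by
  have : Ssum c W b M (-x) = (starRingEnd ℂ) (Ssum c W b M x) := by
    unfold Ssum
    rw [map_sum]
    refine Finset.sum_congr rfl fun n _ => ?_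
    rw [map_mul, Complex.conj_ofReal, neg_mul, ex_neg]
  rw [this, RCLike.norm_conj]

lemma dir1 {c β : ℝ} (hc : 1 < c) (hβ : 2 ≤ β) (hβ3 : β ≤ 3) (h : PP (c / (c - 1)) β) (a b : ℝ)
    (ha : 0 < a) (hab : a < b) :
    ∃ C > 0, ∀ M ≥ 1, ∀ T > 0, Nc (II a b M) (om c M) (1 / T) ≤
      C * ((M ^ 4 + M ^ (4 - β) * T ^ (β - 1) + T ^ 2) / T) := by
  have hb : 0 < b := ha.trans hab
  obtain ⟨b', hb'⟩ : ∃ b', b' = b + a / 2 := ⟨_, rfl⟩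
  have hex := exists_Wt a b ha hab
  rw [← hb'] at hex
  obtain ⟨w, hw⟩ := hex
  obtain ⟨C, hC, H⟩ := dyadic hc hβ hβ3 h w (by positivity) (by rw [hb']; linarith)
  refine ⟨rexp π * (32 * (2 * C)), by positivity, ?_⟩
  intro M hM T hT
  have hM0 : 0 < M := by linarith
  set I := II a b M with hI
  set R := Finset.range (⌊b' * M⌋₊ + 1) with hR
  set E := (M ^ 4 + M ^ (4 - β) * T ^ (β - 1) + T ^ 2) with hE
  have hE0 : 0 ≤ E := by positivity
  have hIR : I ⊆ R := by
    intro n hn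
    simp only [hI, II, Finset.mem_Icc] at hn
    simp only [hR, Finset.mem_range]
    have : ⌊b * M⌋₊ ≤ ⌊b' * M⌋₊ := Nat.floor_le_floor (by rw [hb']; nlinarith)
    omega
  have hW : ∀ n ∈ I, w.W (n / M) = 1 := by
    intro n hn
    simp only [hI, II, Finset.mem_Icc] at hn
    apply hw
    constructor
    · rw [le_div_iff₀ hM0]; exact Nat.ceil_le.mp hn.1
    · rw [div_le_iff₀ hM0]
      exact le_trans (by exact_mod_cast hn.2) (Nat.floor_le (by positivity))
  set Wn : ℕ → ℝ := fun n => w.W (n / M) with hWn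
  obtain ⟨g1, g2⟩ := gauss_four R Wn (om c M) T
  have step1 : Nc I (om c M) (1 / T) ≤ rexp π * ∑ q ∈ R ×ˢ R ×ˢ R ×ˢ R,
      (Wn q.1 * Wn q.2.1 * Wn q.2.2.1 * Wn q.2.2.2) * rexp (-π * (T * Dl (om c M) q) ^ 2) := by
    have hsub : I ×ˢ I ×ˢ I ×ˢ I ⊆ R ×ˢ R ×ˢ R ×ˢ R :=
      Finset.product_subset_product hIR (Finset.product_subset_product hIR (Finset.product_subset_product hIR hIR))
    have hnn : ∀ n, 0 ≤ Wn n := fun n => w.nn _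
    refine le_trans ?_ (mul_le_mul_of_nonneg_left (Finset.sum_le_sum_of_subset_of_nonneg hsub ?_) (by positivity))
    · unfold Nc
      rw [Finset.mul_sum]
      refine Finset.sum_le_sum fun q hq => ?_
      simp only [Finset.mem_product] at hq
      have e1 : Wn q.1 = 1 := hW _ hq.1
      have e2 : Wn q.2.1 = 1 := hW _ hq.2.1
      have e3 : Wn q.2.2.1 = 1 := hW _ hq.2.2.1
      have e4 : Wn q.2.2.2 = 1 := hW _ hq.2.2.2
      rw [e1, e2, e3, e4]
      split_ifs with hd
      · have : (T * Dl (om c M) q) ^ 2 ≤ 1 := by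
          rw [sq_le_one_iff_abs_le_one, abs_mul, abs_of_pos hT]
          calc T * |Dl (om c M) q| ≤ T * (1 / T) := by gcongr
            _ = 1 := by field_simp
        have h3 : 1 ≤ rexp π * rexp (-π * (T * Dl (om c M) q) ^ 2) := by
          rw [← Real.exp_add]
          apply Real.one_le_exp
          have := Real.pi_pos
          nlinarith
        simpa using h3
      · positivity
    · intro q _ _
      have := hnn q.1
      have := hnn q.2.1
      have := hnn q.2.2.1
      have := hnn q.2.2.2
      positivity
  rw [← g2] at step1
  set S := Ssum c w.W b' M with hS
  have hSc : Continuous S := Ssum_cont _ _ _ _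
  have hfun : ∀ v : ℝ, ‖∑ j ∈ R, (Wn j : ℂ) * ex (v * T * om c M j)‖ = ‖S (v * T)‖ := fun v => rfl
  simp only [hfun] at step1 g1
  refine step1.trans ?_
  rw [mul_assoc]
  gcongr
  have := gauss_tail (fun v => ‖S (v * T)‖ ^ 4) (by fun_prop) (fun v => by positivity) g1 (2 * C * (E / T))
    (by positivity) (by
      intro k
      set r := (2:ℝ) ^ k with hr
      have hr1 : 1 ≤ r := one_le_pow₀ (by norm_num)
      have hr0 : 0 < r := by linarith
      have hi : ∀ u v : ℝ, IntervalIntegrable (fun v => ‖S v‖ ^ 4) volume u v := fun u v =>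
        (hSc.norm.pow 4).intervalIntegrable u v
      rw [intervalIntegral.integral_comp_mul_right (fun x => ‖S x‖ ^ 4) hT.ne',
        ← intervalIntegral.integral_add_adjacent_intervals (hi _ 0) (hi 0 _)]
      have e1 : ∫ x in (-r * T)..0, ‖S x‖ ^ 4 = ∫ x in 0..(r * T), ‖S x‖ ^ 4 := by
        have := intervalIntegral.integral_comp_neg (a := 0) (b := r * T) (fun x => ‖S x‖ ^ 4)
        simp only [hS, Ssum_neg, neg_zero] at this
        rw [neg_mul]
        exact this.symm
      rw [e1, smul_eq_mul]
      have e2 := H M hM (r * T) (by positivity)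
      have e3 : (r * T) ^ (β - 1) ≤ r ^ 2 * T ^ (β - 1) := by
        rw [Real.mul_rpow hr0.le hT.le]
        gcongr
        calc r ^ (β - 1) ≤ r ^ (2:ℝ) := Real.rpow_le_rpow_of_exponent_le hr1 (by linarith)
          _ = r ^ 2 := by norm_num
      have e4 : M ^ 4 + M ^ (4 - β) * (r * T) ^ (β - 1) + (r * T) ^ 2 ≤ r ^ 2 * E := by
        have : M ^ 4 ≤ r ^ 2 * M ^ 4 := le_mul_of_one_le_left (by positivity) (one_le_pow₀ hr1)
        have : M ^ (4 - β) * (r * T) ^ (β - 1) ≤ M ^ (4 - β) * (r ^ 2 * T ^ (β - 1)) := by gcongr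
        rw [hE]
        nlinarith
      have e5 : (4:ℝ) ^ k = r ^ 2 := by rw [hr, ← pow_mul, mul_comm, pow_mul]; norm_num
      calc _ ≤ T⁻¹ * (C * (r ^ 2 * E) + C * (r ^ 2 * E)) := by
            have := e2.trans (mul_le_mul_of_nonneg_left e4 hC.le)
            gcongr
        _ = _ := by rw [e5]; field_simp; ring)
  calc _ ≤ _ := this
    _ = _ := by ring

end Sj

section Sk
open Real Set Filter Topology MeasureTheory

lemma II_card (a b M : ℝ) (ha : 0 < a) (hb : 0 < b) (hM : 0 < M) : ((II a b M).card : ℝ) ≤ b * M := by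
  unfold II
  rw [Nat.card_Icc]
  have h1 : 1 ≤ ⌈a * M⌉₊ := Nat.one_le_iff_ne_zero.mpr (Nat.ceil_pos.mpr (by positivity)).ne'
  have h2 : ⌊b * M⌋₊ + 1 - ⌈a * M⌉₊ ≤ ⌊b * M⌋₊ := by omega
  exact le_trans (by exact_mod_cast h2) (Nat.floor_le (by positivity))

lemma Nc_mono (I : Finset ℕ) (ω : ℕ → ℝ) {δ δ' : ℝ} (h : δ ≤ δ') : Nc I ω δ ≤ Nc I ω δ' := by
  unfold Nc
  refine Finset.sum_le_sum fun q _ => ?_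
  split_ifs with h1 h2
  · exact le_rfl
  · exact absurd (h1.trans h) h2
  · norm_num
  · exact le_rfl

lemma Nc_le_card (I : Finset ℕ) (ω : ℕ → ℝ) (δ : ℝ) : Nc I ω δ ≤ (I.card : ℝ) ^ 4 := by
  unfold Nc
  calc _ ≤ ∑ q ∈ I ×ˢ I ×ˢ I ×ˢ I, (1:ℝ) := by
        refine Finset.sum_le_sum fun q _ => ?_
        split_ifs <;> norm_num
    _ = _ := by
        simp only [Finset.sum_const, Finset.card_product, nsmul_eq_mul, mul_one]
        push_cast; ring

lemma Nc_fiber (I : Finset ℕ) (ω : ℕ → ℝ) (δ E : ℝ) (hE : 0 ≤ E)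
    (h : ∀ m ∈ I, ∀ n ∈ I, |ω m - ω n| ≤ 2 * δ → |(m:ℝ) - n| ≤ E) :
    Nc I ω δ ≤ (I.card : ℝ) ^ 3 * (1 + E) := by
  have key : ∀ x : ℝ, ∑ n ∈ I, (if |x - ω n| ≤ δ then (1:ℝ) else 0) ≤ 1 + E := by
    intro x
    rw [← Finset.sum_filter, Finset.sum_const, nsmul_eq_mul, mul_one]
    set F := I.filter (fun n => |x - ω n| ≤ δ) with hF
    rcases F.eq_empty_or_nonempty with h0 | h0
    · rw [h0]; simp; linarith
    · set m := F.min' h0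
      have hm : m ∈ F := F.min'_mem h0
      have hsub : F ⊆ Finset.Icc m (m + ⌊E⌋₊) := by
        intro n hn
        have hmn : m ≤ n := F.min'_le n hn
        rw [hF, Finset.mem_filter] at hm hn
        have h3 := h n hn.1 m hm.1 (by
          rw [abs_le]
          have := abs_le.mp hm.2
          have := abs_le.mp hn.2
          constructor <;> linarith)
        rw [Finset.mem_Icc]
        refine ⟨hmn, ?_⟩
        have h4 : ((n - m : ℕ) : ℝ) ≤ E := by
          rw [Nat.cast_sub hmn]; exact (le_abs_self _).trans h3
        have := Nat.le_floor h4
        omega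
      have h5 := Finset.card_le_card hsub
      rw [Nat.card_Icc] at h5
      have h6 : F.card ≤ 1 + ⌊E⌋₊ := by omega
      calc (F.card : ℝ) ≤ ((1 + ⌊E⌋₊ : ℕ) : ℝ) := by exact_mod_cast h6
        _ = 1 + (⌊E⌋₊ : ℝ) := by push_cast; ring
        _ ≤ _ := by gcongr; exact Nat.floor_le hE
  unfold Nc
  simp only [Finset.sum_product, Dl]
  calc _ ≤ ∑ _x ∈ I, ∑ _y ∈ I, ∑ _z ∈ I, (1 + E) :=
        Finset.sum_le_sum fun x _ => Finset.sum_le_sum fun y _ => Finset.sum_le_sum fun z _ => key _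
    _ = _ := by
        simp only [Finset.sum_const, nsmul_eq_mul]; ring

lemma PP_base {c : ℝ} (hc : 1 < c) : PP c 3 := by
  intro a b ha hab
  have hb : 0 < b := ha.trans hab
  obtain ⟨K, hK, hL⟩ := rpow_lip (1 / c) (a ^ c) (b ^ c) (by positivity)
  refine ⟨b ^ 3 * (1 + 2 * K), by positivity, ?_⟩
  intro M hM T hT
  have hI : ∀ n ∈ II a b M, (n / M : ℝ) ∈ Icc a b := by
    intro n hn
    simp only [II, Finset.mem_Icc] at hn
    constructor
    · rw [le_div_iff₀ hM]; exact Nat.ceil_le.mp hn.1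
    · rw [div_le_iff₀ hM]
      exact le_trans (by exact_mod_cast hn.2) (Nat.floor_le (by positivity))
  have hmem : ∀ n ∈ II a b M, om c M n ∈ Icc (a ^ c) (b ^ c) := by
    intro n hn
    have := hI n hn
    have h0 : (0:ℝ) ≤ n / M := by positivity
    have hc0 : 0 ≤ c := by linarith
    exact ⟨Real.rpow_le_rpow ha.le this.1 hc0, Real.rpow_le_rpow h0 this.2 hc0⟩
  have hinv : ∀ n : ℕ, (om c M n) ^ (1 / c) = n / M := by
    intro n
    have h0 : (0:ℝ) ≤ n / M := by positivity
    unfold om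
    rw [one_div, Real.rpow_rpow_inv h0 (by linarith)]
  have := Nc_fiber (II a b M) (om c M) (1 / T) (2 * K * M / T) (by positivity) (by
    intro m hm n hn hmn
    have h1 := hL _ (hmem m hm) _ (hmem n hn)
    rw [hinv, hinv, ← sub_div, abs_div, abs_of_pos hM, div_le_iff₀ hM] at h1
    calc _ ≤ _ := h1
      _ ≤ K * (2 * (1 / T)) * M := by gcongr
      _ = _ := by ring)
  calc _ ≤ _ := this
    _ ≤ (b * M) ^ 3 * (1 + 2 * K * M / T) := by gcongr; exact II_card a b M ha hb hM
    _ = b ^ 3 * (M ^ 3 + 2 * K * (M ^ 4 / T)) := by ring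
    _ ≤ b ^ 3 * ((1 + 2 * K) * (M ^ 3 + M ^ 4 / T)) := by
        gcongr
        have h1 : 0 ≤ M ^ 4 / T := by positivity
        have h2 : 0 ≤ K * M ^ 3 := by positivity
        nlinarith
    _ = _ := by norm_num; ring

lemma PP_step {c β : ℝ} (hc : 1 < c) (hβ : 2 ≤ β) (hβ3 : β ≤ 3) (h : PP (c / (c - 1)) β) :
    PP c (4 - β / (β - 1)) := by
  intro a b ha hab
  have hb : 0 < b := ha.trans hab
  obtain ⟨C, hC, H⟩ := dir1 hc hβ hβ3 h a b ha hab
  have hβ1 : 0 < β - 1 := by linarith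
  have hq : 0 < β / (β - 1) := by positivity
  have hq2 : β / (β - 1) ≤ 2 := by rw [div_le_iff₀ hβ1]; linarith
  refine ⟨3 * C + b ^ 4, by positivity, ?_⟩
  intro M hM T hT
  set q := β / (β - 1) with hqd
  have hp : 0 < M ^ (4 - q) := by positivity
  have hp2 : 0 < M ^ 4 / T := by positivity
  by_cases hM1 : M < 1
  · calc _ ≤ _ := Nc_le_card _ _ _
      _ ≤ (b * M) ^ 4 := by gcongr; exact II_card a b M ha hb hM
      _ = b ^ 4 * M ^ (4:ℝ) := by rw [mul_pow]; norm_num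
      _ ≤ b ^ 4 * M ^ (4 - q) := by
          have := Real.rpow_le_rpow_of_exponent_ge hM hM1.le (show 4 - q ≤ 4 by linarith)
          exact mul_le_mul_of_nonneg_left this (by positivity)
      _ ≤ (3 * C + b ^ 4) * (M ^ (4 - q) + M ^ 4 / T) := by
          gcongr <;> linarith
  · push Not at hM1
    have small : ∀ T > 0, T ≤ M ^ q → Nc (II a b M) (om c M) (1 / T) ≤ 3 * C * (M ^ 4 / T) := by
      intro T hT hTq
      have h1 : T ^ (β - 1) ≤ M ^ β := by
        calc T ^ (β - 1) ≤ (M ^ q) ^ (β - 1) := Real.rpow_le_rpow hT.le hTq hβ1.le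
          _ = M ^ β := by rw [← Real.rpow_mul hM.le, hqd, div_mul_cancel₀ _ hβ1.ne']
      have h2 : M ^ (4 - β) * T ^ (β - 1) ≤ M ^ 4 := by
        calc _ ≤ M ^ (4 - β) * M ^ β := by gcongr
          _ = M ^ 4 := by rw [← Real.rpow_add hM]; norm_num
      have h3 : T ^ 2 ≤ M ^ 4 := by
        have : T ≤ M ^ 2 := by
          calc T ≤ M ^ q := hTq
            _ ≤ M ^ (2:ℝ) := Real.rpow_le_rpow_of_exponent_le hM1 hq2
            _ = M ^ 2 := by norm_num
        calc T ^ 2 ≤ (M ^ 2) ^ 2 := by gcongr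
          _ = _ := by ring
      calc _ ≤ _ := H M hM1 T hT
        _ ≤ C * ((M ^ 4 + M ^ 4 + M ^ 4) / T) := by gcongr
        _ = _ := by ring
    by_cases hTq : T ≤ M ^ q
    · calc _ ≤ _ := small T hT hTq
        _ ≤ (3 * C + b ^ 4) * (M ^ (4 - q) + M ^ 4 / T) := by
          gcongr
          · linarith [pow_pos hb 4]
          · linarith
    · push Not at hTq
      have hq0 : 0 < M ^ q := by positivity
      calc _ ≤ _ := Nc_mono _ _ (one_div_le_one_div_of_le hq0 hTq.le)
        _ ≤ _ := small _ hq0 le_rfl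
        _ = 3 * C * M ^ (4 - q) := by
            rw [Real.rpow_sub hM]; norm_num
        _ ≤ (3 * C + b ^ 4) * (M ^ (4 - q) + M ^ 4 / T) := by
          gcongr
          · linarith [pow_pos hb 4]
          · linarith

lemma PP_all (k : ℕ) : ∀ c : ℝ, 1 < c → PP c (2 + 1 / ((k:ℝ) + 1)) := by
  induction k with
  | zero =>
    intro c hc
    have := PP_base hc
    norm_num
    exact this
  | succ k ih =>
    intro c hc
    have hc1 : 0 < c - 1 := by linarith
    have hk : (0:ℝ) < (k:ℝ) + 1 := by positivity
    have hle : 1 / ((k:ℝ) + 1) ≤ 1 := by rw [div_le_one hk]; linarith [(Nat.cast_nonneg k : (0:ℝ) ≤ k)]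
    have hpos : 0 < 1 / ((k:ℝ) + 1) := by positivity
    have := PP_step hc (by linarith) (by linarith) (ih (c / (c - 1)) (by rw [lt_div_iff₀ hc1]; linarith))
    convert this using 1
    push_cast
    have : (2 + 1 / ((k:ℝ) + 1) - 1) = (k + 2) / (k + 1) := by field_simp; ring
    rw [this]
    have : (k:ℝ) + 2 ≠ 0 := by positivity
    have : (k:ℝ) + 1 + 1 ≠ 0 := by positivity
    field_simp
    ring

end Sk

theorem stmt5 (c : ℝ) (hc : 1 < c) (hci : ∀ n : ℤ, c ≠ (n : ℝ))
    (η : ℝ) (hη : 0 < η) :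
    ∃ C > 0, ∀ M γ : ℝ, 1 < M → 0 < γ →
      (Set.ncard {q : ℕ × ℕ × ℕ × ℕ |
          (M < (q.1 : ℝ) ∧ (q.1 : ℝ) ≤ 2 * M) ∧
          (M < (q.2.1 : ℝ) ∧ (q.2.1 : ℝ) ≤ 2 * M) ∧
          (M < (q.2.2.1 : ℝ) ∧ (q.2.2.1 : ℝ) ≤ 2 * M) ∧
          (M < (q.2.2.2 : ℝ) ∧ (q.2.2.2 : ℝ) ≤ 2 * M) ∧
          |(q.1 : ℝ) ^ c + (q.2.1 : ℝ) ^ c - (q.2.2.1 : ℝ) ^ c - (q.2.2.2 : ℝ) ^ c| < γ} : ℝ)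
        ≤ C * (γ * M ^ (4 - c) + M ^ 2) * M ^ η := by
  obtain ⟨k, hk⟩ := exists_nat_one_div_lt hη
  obtain ⟨C, hC, H⟩ := PP_all k c hc 1 2 (by norm_num) (by norm_num)
  refine ⟨C, hC, ?_⟩
  intro M γ hM hγ
  have hM0 : 0 < M := by linarith
  have hMc : 0 < M ^ c := by positivity
  have H1 := H M hM0 (M ^ c / γ) (by positivity)
  set I := II 1 2 M with hI
  have hmem : ∀ n : ℕ, M < (n:ℝ) ∧ (n:ℝ) ≤ 2 * M → n ∈ I := by
    intro n hn
    rw [hI, II, Finset.mem_Icc]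
    exact ⟨Nat.ceil_le.mpr (by rw [one_mul]; exact hn.1.le), Nat.le_floor hn.2⟩
  have hNc : Nc I (om c M) (1 / (M ^ c / γ)) =
      (((I ×ˢ I ×ˢ I ×ˢ I).filter (fun q => |Dl (om c M) q| ≤ 1 / (M ^ c / γ))).card : ℝ) := by
    unfold Nc
    rw [← Finset.sum_filter, Finset.sum_const, nsmul_eq_mul, mul_one]
  have hcard : (Set.ncard {q : ℕ × ℕ × ℕ × ℕ |
          (M < (q.1 : ℝ) ∧ (q.1 : ℝ) ≤ 2 * M) ∧
          (M < (q.2.1 : ℝ) ∧ (q.2.1 : ℝ) ≤ 2 * M) ∧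
          (M < (q.2.2.1 : ℝ) ∧ (q.2.2.1 : ℝ) ≤ 2 * M) ∧
          (M < (q.2.2.2 : ℝ) ∧ (q.2.2.2 : ℝ) ≤ 2 * M) ∧
          |(q.1 : ℝ) ^ c + (q.2.1 : ℝ) ^ c - (q.2.2.1 : ℝ) ^ c - (q.2.2.2 : ℝ) ^ c| < γ} : ℝ) ≤
      Nc I (om c M) (1 / (M ^ c / γ)) := by
    rw [hNc, ← Set.ncard_coe_finset]
    have : ∀ s t : Set (ℕ × ℕ × ℕ × ℕ), t.Finite → s ⊆ t → (s.ncard : ℝ) ≤ t.ncard := fun s t ht hst => by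
      exact_mod_cast Set.ncard_le_ncard hst ht
    refine this _ _ (Finset.finite_toSet _) ?_
    rintro q ⟨h1, h2, h3, h4, h5⟩
    rw [Finset.mem_coe, Finset.mem_filter]
    refine ⟨?_, ?_⟩
    · simp only [Finset.mem_product]
      exact ⟨hmem _ h1, hmem _ h2, hmem _ h3, hmem _ h4⟩
    · have hom : ∀ n : ℕ, om c M n = (n:ℝ) ^ c / M ^ c := fun n => by
        unfold om; rw [Real.div_rpow (by positivity) hM0.le]
      unfold Dl
      simp only [hom]
      rw [← add_div, ← sub_div, ← sub_div, abs_div, abs_of_pos hMc, one_div_div]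
      gcongr
  refine hcard.trans (H1.trans ?_)
  rw [mul_assoc]
  gcongr
  have e1 : M ^ (2 + 1 / ((k:ℝ) + 1)) ≤ M ^ 2 * M ^ η := by
    rw [Real.rpow_add hM0]
    norm_num only [Real.rpow_ofNat]
    gcongr
    · exact hM.le
  have e2 : M ^ 4 / (M ^ c / γ) = γ * M ^ (4 - c) := by
    rw [Real.rpow_sub hM0]; norm_num only [Real.rpow_ofNat]; field_simp
  have e3 : 1 ≤ M ^ η := Real.one_le_rpow hM.le hη.le
  have e4 : 0 < γ * M ^ (4 - c) := by positivity
  rw [e2]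
  nlinarith
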